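/- Let G be a 2-connected simple graph on n vertices. Then the circumference satisfies c(G) ≥ min{ n, ω(G) + δ(G) }, unless G is isomorphic to H(n, ω(G)+δ(G), δ(G)) or to Z(n, ω(G)+δ(G), δ(G)). -/

import Mathlib

open SimpleGraph

/-- The number of edges of a simple graph. -/
noncomputable def edgeCount {V : Type*} (G : SimpleGraph V) : ℕ := G.edgeSet.ncard

/-- `H` occurs as a subgraph of `G` (there is an injective map preserving adjacency). -/
def ContainsCopy {V W : Type*} (G : SimpleGraph V) (H : SimpleGraph W) : Prop :=
  ∃ f : W → V, Function.Injective f ∧ ∀ a b : W, H.Adj a b → G.Adj (f a) (f b)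

/-- The Turán number `ex(n, H)`: the maximum number of edges of an `H`-free
simple graph on `n` vertices. -/
noncomputable def exNum (n : ℕ) {W : Type*} (H : SimpleGraph W) : ℕ :=
  sSup {m | ∃ G : SimpleGraph (Fin n), ¬ ContainsCopy G H ∧ edgeCount G = m}

/-- `h(n,k,a) = C(k-a,2) + a(n-k+a)`. -/
def hFun (n k a : ℕ) : ℕ := (k - a).choose 2 + a * (n - k + a)

/-- `c(n,m,ℓ) = C(m-1,2) + t·C(ℓ-1,2) + C(r,2)` where `n = (m-1) + t(ℓ-1) + r`,
`0 ≤ r < ℓ-1`. -/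
def cFun (n m l : ℕ) : ℕ :=
  (m - 1).choose 2 + ((n - (m - 1)) / (l - 1)) * ((l - 1).choose 2)
    + ((n - (m - 1)) % (l - 1)).choose 2

/-- A graph is 2-connected if it has at least 3 vertices and removing any
single vertex leaves a connected graph. -/
def TwoConnected {V : Type*} [Fintype V] (G : SimpleGraph V) : Prop :=
  3 ≤ Fintype.card V ∧ ∀ v : V, (G.induce ({v}ᶜ : Set V)).Connected

/-- The circumference of a graph: the length of a longest cycle
(`0` if there is no cycle). -/
noncomputable def circumference {V : Type*} (G : SimpleGraph V) : ℕ :=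
  sSup {m | ∃ (v : V) (c : G.Walk v v), c.IsCycle ∧ c.length = m}

/-- The number of neighbours (in `G`) of `x` lying on the walk `p`. -/
noncomputable def degOn {V : Type*} (G : SimpleGraph V) {a b : V} (p : G.Walk a b) (x : V) : ℕ :=
  {v | v ∈ p.support ∧ G.Adj x v}.ncard

/-- The graph obtained from `G` by adding the edge `uv`. -/
def addEdge {V : Type*} (G : SimpleGraph V) (u v : V) : SimpleGraph V :=
  G ⊔ SimpleGraph.fromEdgeSet {s(u, v)}

/-- The minimum degree of a graph (with classical decidability). -/
noncomputable def minDeg {V : Type*} [Fintype V] (G : SimpleGraph V) : ℕ :=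
  @SimpleGraph.minDegree _ G _ (Classical.decRel _)
open SimpleGraph

/-- Membership (as 0-indexed natural) in the set `C` of `H_k(s)`:
`C = {x_{s+1}, x_{s+3}, …, x_{2k-s+1}}` (1-indexed). -/
def inC_HkS (k s i : ℕ) : Prop := s ≤ i ∧ i ≤ 2 * k - s ∧ (i - s) % 2 = 0

/-- Membership in the set `D` of `H_k(s)`: `D = {x_{s+2}, …, x_{2k-s}}` (1-indexed). -/
def inD_HkS (k s i : ℕ) : Prop := s ≤ i ∧ i ≤ 2 * k - s ∧ (i - s) % 2 = 1

/-- The graph `H_k(s)`: the path `x_1 … x_{2k+1}` (here 0-indexed on `Fin (2k+1)`),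
plus all edges inside `A = {x_1,…,x_s}`, all edges inside `B = {x_{2k-s+2},…,x_{2k+1}}`,
and all edges between `A ∪ B` and `C = {x_{s+1}, x_{s+3}, …, x_{2k-s+1}}`. -/
def HkS (k s : ℕ) : SimpleGraph (Fin (2 * k + 1)) :=
  SimpleGraph.fromRel (fun x y =>
    ((y : ℕ) = (x : ℕ) + 1) ∨
    ((x : ℕ) < s ∧ (y : ℕ) < s) ∨
    (2 * k - s + 1 ≤ (x : ℕ) ∧ 2 * k - s + 1 ≤ (y : ℕ)) ∨
    (((x : ℕ) < s ∨ 2 * k - s + 1 ≤ (x : ℕ)) ∧ inC_HkS k s (y : ℕ)))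

/-- Membership in the part `C` (of size `k-1`) of `H_k(M_2)` (0-indexed):
`C = {x_3, x_5, …, x_{2k-1}}` (1-indexed). -/
def inC_HkM2 (k i : ℕ) : Prop := 2 ≤ i ∧ i ≤ 2 * k - 2 ∧ i % 2 = 0

/-- Membership in `D` of `H_k(M_2)` (0-indexed): `D = {x_4, x_6, …, x_{2k-2}}` (1-indexed). -/
def inD_HkM2 (k i : ℕ) : Prop := 3 ≤ i ∧ i ≤ 2 * k - 3 ∧ i % 2 = 1

/-- The graph `H_k(M_2)`: the complete bipartite graph with parts
`C = {x_3,x_5,…,x_{2k-1}}` (size `k-1`) and `A ∪ B ∪ D` (size `k+2`), where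
`A = {x_1,x_2}`, `B = {x_{2k},x_{2k+1}}`, `D = {x_4,…,x_{2k-2}}`, together with the
matching edges `x_1x_2` and `x_{2k}x_{2k+1}` (here 0-indexed on `Fin (2k+1)`). -/
def HkM2 (k : ℕ) : SimpleGraph (Fin (2 * k + 1)) :=
  SimpleGraph.fromRel (fun x y =>
    ((x : ℕ) = 0 ∧ (y : ℕ) = 1) ∨
    ((x : ℕ) = 2 * k - 1 ∧ (y : ℕ) = 2 * k) ∨
    (inC_HkM2 k (x : ℕ) ∧ ¬ inC_HkM2 k (y : ℕ)))

/-- Membership in the part `B = {b_1, …, b_{k-1}}` of `H_k(P_3)`; on `Fin (2k+1)` we take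
`a_1 = 0, a_2 = 1, a_3 = 2`, `B = {3, …, k+1}`, `C = {k+2, …, 2k}`. -/
def inB_HkP3 (k i : ℕ) : Prop := 3 ≤ i ∧ i ≤ k + 1

/-- Membership in the set `C = {c_1, …, c_{k-1}}` of `H_k(P_3)`. -/
def inC_HkP3 (k i : ℕ) : Prop := k + 2 ≤ i ∧ i ≤ 2 * k

/-- The graph `H_k(P_3)`: the complete bipartite graph `K_{k-1,k+2}` with parts
`B = {b_1,…,b_{k-1}}` and `A ∪ C` where `A = {a_1,a_2,a_3}`, `C = {c_1,…,c_{k-1}}`,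
plus the edges `a_1a_2` and `a_2a_3`. Here `a_1 = 0, a_2 = 1, a_3 = 2`,
`B = {3,…,k+1}`, `C = {k+2,…,2k}` on `Fin (2k+1)`. -/
def HkP3 (k : ℕ) : SimpleGraph (Fin (2 * k + 1)) :=
  SimpleGraph.fromRel (fun x y =>
    ((x : ℕ) = 0 ∧ (y : ℕ) = 1) ∨
    ((x : ℕ) = 1 ∧ (y : ℕ) = 2) ∨
    (inB_HkP3 k (x : ℕ) ∧ ¬ inB_HkP3 k (y : ℕ)))

/-- The graph `F_k(t)`: the path `x_1 … x_{2k+t}` (0-indexed on `Fin (2k+t)`), plus all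
edges inside `A = {x_1,…,x_k}`, all edges inside `B = {x_{k+t+1},…,x_{2k+t}}`, all edges
between `x_k` and `B`, and all edges between `x_{k+t+1}` and `A`. -/
def FkT (k t : ℕ) : SimpleGraph (Fin (2 * k + t)) :=
  SimpleGraph.fromRel (fun x y =>
    ((y : ℕ) = (x : ℕ) + 1) ∨
    ((x : ℕ) < k ∧ (y : ℕ) < k) ∨
    (k + t ≤ (x : ℕ) ∧ k + t ≤ (y : ℕ)) ∨
    ((x : ℕ) = k - 1 ∧ k + t ≤ (y : ℕ)) ∨
    ((x : ℕ) = k + t ∧ (y : ℕ) < k))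

/-- The graph `H(n,k,a)`: vertices `{0,…,k-2a-1} = A`, `{k-2a,…,k-a-1} = B`,
`{k-a,…,n-1} = C`; all edges inside `A ∪ B` and all edges between `B` and `C`. -/
def Hgraph (n k a : ℕ) : SimpleGraph (Fin n) :=
  SimpleGraph.fromRel (fun x y =>
    ((x : ℕ) < k - a ∧ (y : ℕ) < k - a) ∨
    (k - 2 * a ≤ (x : ℕ) ∧ (x : ℕ) < k - a ∧ k - a ≤ (y : ℕ)))

/-- The graph `Z(n,k,t)` (for `n = (k-t-2) + ℓ(t-1) + 2`): two universal mutually adjacent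
vertices `0, 1`, a clique `K_{k-t-2}` on `{2,…,k-t-1}`, and consecutive blocks of size
`t-1` on the remaining vertices, each forming a clique `K_{t-1}`. -/
def Zgraph (n k t : ℕ) : SimpleGraph (Fin n) :=
  SimpleGraph.fromRel (fun x y =>
    ((x : ℕ) < 2) ∨ ((y : ℕ) < 2) ∨
    (2 ≤ (x : ℕ) ∧ (x : ℕ) < k - t ∧ 2 ≤ (y : ℕ) ∧ (y : ℕ) < k - t) ∨
    (k - t ≤ (x : ℕ) ∧ k - t ≤ (y : ℕ) ∧
      ((x : ℕ) - (k - t)) / (t - 1) = ((y : ℕ) - (k - t)) / (t - 1)))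

/-- The first `m` terms of `x` are the consecutive vertices of a path of `G`. -/
structure IsPathSeq {V : Type*} (G : SimpleGraph V) (x : ℕ → V) (m : ℕ) : Prop where
  inj : ∀ i j, i < m → j < m → x i = x j → i = j
  adj : ∀ i, i + 1 < m → G.Adj (x i) (x (i + 1))

/-- The first `m` terms of `x` are the consecutive vertices of a cycle of `G`. -/
structure IsCycleSeq {V : Type*} (G : SimpleGraph V) (x : ℕ → V) (m : ℕ) : Prop
    extends IsPathSeq G x m where
  three_le : 3 ≤ m
  closes : G.Adj (x (m - 1)) (x 0)

/-- Concatenation of the first `a` terms of `x` with the sequence `y`. -/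
def catSeq {V : Type*} (x : ℕ → V) (a : ℕ) (y : ℕ → V) : ℕ → V :=
  fun i => if i < a then x i else y (i - a)

section PathSeq

variable {V : Type*} {G : SimpleGraph V} {x y : ℕ → V} {a b m : ℕ}

theorem catSeq_of_lt {i : ℕ} (h : i < a) : catSeq x a y i = x i := by
  simp [catSeq, h]

theorem catSeq_of_le {i : ℕ} (h : a ≤ i) : catSeq x a y i = y (i - a) := by
  simp [catSeq, Nat.not_lt.2 h]

theorem IsPathSeq.cat (hx : IsPathSeq G x a) (hy : IsPathSeq G y b)
    (hxy : 0 < a → 0 < b → G.Adj (x (a - 1)) (y 0))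
    (hd : ∀ i j, i < a → j < b → x i ≠ y j) : IsPathSeq G (catSeq x a y) (a + b) := by
  refine ⟨fun i j hi hj h => ?_, fun i hi => ?_⟩
  · rcases lt_or_ge i a with h1 | h1 <;> rcases lt_or_ge j a with h2 | h2
    · rw [catSeq_of_lt h1, catSeq_of_lt h2] at h
      exact hx.inj i j h1 h2 h
    · rw [catSeq_of_lt h1, catSeq_of_le h2] at h
      exact absurd h (hd _ _ h1 (by omega))
    · rw [catSeq_of_le h1, catSeq_of_lt h2] at h
      exact absurd h.symm (hd _ _ h2 (by omega))
    · rw [catSeq_of_le h1, catSeq_of_le h2] at h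
      have := hy.inj _ _ (by omega) (by omega) h
      omega
  · rcases lt_or_ge (i + 1) a with h1 | h1
    · rw [catSeq_of_lt h1, catSeq_of_lt (by omega)]
      exact hx.adj i h1
    · rcases Nat.lt_or_ge i a with h2 | h2
      · rw [catSeq_of_le h1, catSeq_of_lt h2]
        obtain rfl : a = i + 1 := by omega
        simpa using hxy (by omega) (by omega)
      · rw [catSeq_of_le h1, catSeq_of_le h2, show i + 1 - a = (i - a) + 1 by omega]
        exact hy.adj _ (by omega)

theorem IsPathSeq.take (hx : IsPathSeq G x m) (h : a ≤ m) : IsPathSeq G x a :=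
  ⟨fun i j hi hj => hx.inj i j (by omega) (by omega), fun i hi => hx.adj i (by omega)⟩

theorem IsPathSeq.drop (hx : IsPathSeq G x m) (s : ℕ) (h : s + a ≤ m) :
    IsPathSeq G (fun i => x (s + i)) a :=
  ⟨fun i j hi hj e => by have := hx.inj _ _ (by omega) (by omega) e; omega,
    fun i hi => hx.adj (s + i) (by omega)⟩

/-- Reading a path backwards from the term of index `s`. -/
theorem IsPathSeq.backwards (hx : IsPathSeq G x m) (s : ℕ) (hs : s < m) (h : a ≤ s + 1) :
    IsPathSeq G (fun i => x (s - i)) a :=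
  ⟨fun i j hi hj e => by have := hx.inj _ _ (by omega) (by omega) e; omega,
    fun i hi => by
      have := hx.adj (s - (i + 1)) (by omega)
      rw [show s - (i + 1) + 1 = s - i by omega] at this
      exact this.symm⟩

theorem IsPathSeq.const (v : V) : IsPathSeq G (fun _ => v) 1 :=
  ⟨fun i j hi hj _ => by omega, fun i hi => by omega⟩

theorem IsPathSeq.card_image [DecidableEq V] (hx : IsPathSeq G x m) :
    ((Finset.range m).image x).card = m := by
  rw [Finset.card_image_of_injOn, Finset.card_range]
  intro i hi j hj h
  simp only [Finset.coe_range, Set.mem_Iio] at hi hj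
  exact hx.inj i j hi hj h

theorem IsPathSeq.length_le_card [Fintype V] (hx : IsPathSeq G x m) : m ≤ Fintype.card V := by
  classical
  rw [← hx.card_image]
  exact Finset.card_le_univ _

theorem IsPathSeq.congr (hx : IsPathSeq G x m) (h : ∀ i < m, y i = x i) : IsPathSeq G y m :=
  ⟨fun i j hi hj e => hx.inj i j hi hj (by rwa [h i hi, h j hj] at e),
    fun i hi => by rw [h i (by omega), h (i + 1) hi]; exact hx.adj i hi⟩

/-- Transposing two terms of a segment whose terms form a clique. -/
theorem IsPathSeq.swap (hx : IsPathSeq G x m) {e f : ℕ}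
    (hK : ∀ i j, e ≤ i → i < f → e ≤ j → j < f → i ≠ j → G.Adj (x i) (x j)) {p q : ℕ}
    (hp : e ≤ p) (hpf : p + 1 < f ∨ p < f ∧ f = m) (hq : e ≤ q)
    (hqf : q + 1 < f ∨ q < f ∧ f = m) (hf : f ≤ m)
    (hpe : e < p ∨ e = 0) (hqe : e < q ∨ e = 0) :
    IsPathSeq G (fun i => x (Equiv.swap p q i)) m := by
  have key : ∀ i, Equiv.swap p q i = if i = p then q else if i = q then p else i :=
    fun i => Equiv.swap_apply_def p q i
  refine ⟨fun i j hi hj h => ?_, fun i hi => ?_⟩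
  · have := hx.inj _ _ (by rw [key]; split_ifs <;> omega) (by rw [key]; split_ifs <;> omega) h
    exact (Equiv.swap p q).injective this
  · by_cases hc : e ≤ i ∧ i + 1 < f
    · apply hK
      · rw [key]; split_ifs <;> omega
      · rw [key]; split_ifs <;> omega
      · rw [key]; split_ifs <;> omega
      · rw [key]; split_ifs <;> omega
      · intro h
        have := (Equiv.swap p q).injective h
        omega
    · have h1 : Equiv.swap p q i = i := by rw [key]; split_ifs <;> omega
      have h2 : Equiv.swap p q (i + 1) = i + 1 := by rw [key]; split_ifs <;> omega
      simp only [h1, h2]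
      exact hx.adj i hi

/-- Removing one vertex of `G` never separates two other vertices. -/
def NoCutVertex {V : Type*} (G : SimpleGraph V) : Prop :=
  ∀ v a b : V, a ≠ v → b ≠ v → ∃ (z : ℕ → V) (l : ℕ), z 0 = a ∧ z l = b ∧
    (∀ i ≤ l, z i ≠ v) ∧ ∀ i < l, G.Adj (z i) (z (i + 1))

/-- A shortest connection between two sets avoiding a vertex. -/
theorem NoCutVertex.exists_path (h : NoCutVertex G) (v : V) (A B : Set V)
    (hA : ∃ a ∈ A, a ≠ v) (hB : ∃ b ∈ B, b ≠ v) :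
    ∃ (z : ℕ → V) (l : ℕ), IsPathSeq G z (l + 1) ∧ z 0 ∈ A ∧ z l ∈ B ∧ (∀ i ≤ l, z i ≠ v) ∧
      (∀ i, 0 < i → i ≤ l → z i ∉ A) ∧ ∀ i < l, z i ∉ B := by
  classical
  have hex : ∃ l, ∃ z : ℕ → V, z 0 ∈ A ∧ z l ∈ B ∧ (∀ i ≤ l, z i ≠ v) ∧
      ∀ i < l, G.Adj (z i) (z (i + 1)) := by
    obtain ⟨a, ha, hav⟩ := hA
    obtain ⟨b, hb, hbv⟩ := hB
    obtain ⟨z, l, h0, hl, h1, h2⟩ := h v a b hav hbv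
    exact ⟨l, z, h0 ▸ ha, hl ▸ hb, h1, h2⟩
  obtain ⟨z, h0, hl, h1, h2⟩ := Nat.find_spec hex
  have hmin : ∀ l, l < Nat.find hex → ¬ _ := fun l hl => Nat.find_min hex hl
  generalize Nat.find hex = l at *
  refine ⟨z, l, ⟨?_, fun i hi => h2 i (by omega)⟩, h0, hl, h1, ?_, ?_⟩
  · have : ∀ i j, i < j → j ≤ l → z i ≠ z j := by
      intro i j hij hj he
      refine hmin (l - (j - i)) (by omega) ⟨fun a => if a ≤ i then z a else z (a + (j - i)), ?_⟩
      refine ⟨by simpa using h0, ?_, ?_, ?_⟩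
      · dsimp only
        split_ifs with hc
        · obtain rfl : j = l := by omega
          rw [show j - (j - i) = i by omega, he]; exact hl
        · rw [show l - (j - i) + (j - i) = l by omega]; exact hl
      · intro a ha
        dsimp only
        split_ifs with hc
        · exact h1 a (by omega)
        · exact h1 _ (by omega)
      · intro a ha
        dsimp only
        split_ifs with hc hc' hc'
        · exact h2 a (by omega)
        · obtain rfl : a = i := by omega
          rw [he, show a + 1 + (j - a) = j + 1 by omega]
          exact h2 j (by omega)
        · omega
        · rw [show a + 1 + (j - i) = a + (j - i) + 1 by omega]
          exact h2 _ (by omega)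
    intro i j hi hj he
    rcases lt_trichotomy i j with hc | hc | hc
    · exact absurd he (this i j hc (by omega))
    · exact hc
    · exact absurd he.symm (this j i hc (by omega))
  · intro i hi hil hA
    refine hmin (l - i) (by omega) ⟨fun a => z (i + a), by simpa using hA, ?_, ?_, ?_⟩
    · dsimp only; rw [show i + (l - i) = l by omega]; exact hl
    · intro a ha; exact h1 _ (by omega)
    · intro a ha; exact h2 (i + a) (by omega)
  · intro i hi hB
    exact hmin i hi ⟨z, h0, hB, fun a ha => h1 a (by omega), fun a ha => h2 a (by omega)⟩

/-- A clique can be traversed from any of its vertices to any other one. -/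
theorem exists_enumeration [DecidableEq V] (K : Finset V) {a b : V} (ha : a ∈ K) (hb : b ∈ K)
    (hab : a ≠ b) :
    ∃ f : ℕ → V, (∀ i j, i < K.card → j < K.card → f i = f j → i = j) ∧
      (∀ i < K.card, f i ∈ K) ∧ (∀ v ∈ K, ∃ i < K.card, f i = v) ∧ f 0 = a ∧
      f (K.card - 1) = b := by
  set l : List V := a :: (((K.erase a).erase b).toList ++ [b]) with hl
  have hbe : b ∈ K.erase a := Finset.mem_erase.2 ⟨hab.symm, hb⟩
  have hlen : l.length = K.card := by
    have h1 := Finset.card_erase_add_one ha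
    have h2 := Finset.card_erase_add_one hbe
    simp only [hl, List.length_cons, List.length_append, Finset.length_toList, List.length_nil]
    omega
  have hnd : l.Nodup := by
    simp [hl, List.nodup_append, Finset.nodup_toList, hab]
    tauto
  have hmem : ∀ v, v ∈ l ↔ v ∈ K := by
    intro v
    simp only [hl, List.mem_cons, List.mem_append, Finset.mem_toList, Finset.mem_erase,
      List.not_mem_nil, or_false]
    constructor
    · rintro (rfl | h | rfl)
      exacts [ha, h.2.2, hb]
    · intro h
      by_cases h1 : v = a <;> by_cases h2 : v = b <;> simp [h1, h2, h]
  have hget : ∀ i (hi : i < l.length), l.getD i a = l[i] := fun i hi => by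
    simp [List.getD, hi]
  refine ⟨fun i => l.getD i a, ?_, ?_, ?_, rfl, ?_⟩
  · intro i j hi hj h
    dsimp only at h
    rw [hget i (by omega), hget j (by omega)] at h
    exact (List.Nodup.getElem_inj_iff hnd).1 h
  · intro i hi
    dsimp only
    rw [hget i (by omega), ← hmem]
    exact List.getElem_mem _
  · intro v hv
    obtain ⟨i, hi, h⟩ := List.mem_iff_getElem.1 ((hmem v).2 hv)
    exact ⟨i, by omega, by dsimp only; rw [hget i hi, h]⟩
  · dsimp only
    rw [hget _ (by rw [hlen]; exact Nat.sub_lt (Finset.card_pos.2 ⟨a, ha⟩) one_pos)]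
    simp [← hlen, hl]

end PathSeq

/-- The neighbours of a vertex, as a finset. -/
noncomputable def nbrs {V : Type*} [Fintype V] (G : SimpleGraph V) (v : V) : Finset V := by
  classical exact Finset.univ.filter (G.Adj v)

theorem mem_nbrs {V : Type*} [Fintype V] {G : SimpleGraph V} {v u : V} :
    u ∈ nbrs G v ↔ G.Adj v u := by
  simp [nbrs]

/-- A graph without cut vertices, with a clique `K` of at least `w` vertices and all degrees at
least `d`, in which all cycles have less than `min m (w + d)` vertices, where `m` bounds the
number of vertices of a path starting in `K`. -/
structure ShortCycles {V : Type*} [Fintype V] (G : SimpleGraph V) (K : Finset V)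
    (w d m : ℕ) : Prop where
  clique : ∀ a ∈ K, ∀ b ∈ K, a ≠ b → G.Adj a b
  card_le : w ≤ K.card
  two_le : 2 ≤ w
  degree_le : ∀ v, d ≤ (nbrs G v).card
  three_le : 3 ≤ m
  cycle_lt : ∀ c l, IsCycleSeq G c l → l < m
  cycle_lt_add : ∀ c l, IsCycleSeq G c l → l < w + d
  longest : ∀ x l, IsPathSeq G x l → 0 < l → x 0 ∈ K → l ≤ m
  noCut : NoCutVertex G

namespace ShortCycles

variable {V : Type*} [Fintype V] {G : SimpleGraph V} {K : Finset V} {w d m : ℕ} {x : ℕ → V}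

theorem exists_index_of_mem (h : ShortCycles G K w d m) (hx : IsPathSeq G x m) (h0 : x 0 ∈ K)
    {a : V} (ha : a ∈ K) : ∃ i < m, x i = a := by
  by_contra! hc
  have h3 := h.three_le
  have := h.longest _ _ ((IsPathSeq.const a).cat hx
    (fun _ _ => h.clique a ha _ h0 (hc 0 (by omega)).symm) fun i j _ hj => (hc j hj).symm)
    (by omega) (by simpa [catSeq] using ha)
  omega

theorem exists_index_of_adj (h : ShortCycles G K w d m) (hx : IsPathSeq G x m) (h0 : x 0 ∈ K)
    {a : V} (ha : G.Adj (x (m - 1)) a) : ∃ i < m, x i = a := by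
  by_contra! hc
  have h3 := h.three_le
  have := h.longest _ _ (hx.cat (IsPathSeq.const a) (fun _ _ => ha) fun i j hi _ => hc i hi)
    (by omega) (by rwa [catSeq_of_lt (by omega)])
  omega

theorem not_adj_zero (h : ShortCycles G K w d m) (hx : IsPathSeq G x m) :
    ¬ G.Adj (x (m - 1)) (x 0) := fun hc =>
  lt_irrefl _ (h.cycle_lt x m ⟨hx, h.three_le, hc⟩)

/-- A path through `K` that leaves the final segment `x t, …` of the path `x` at its first
vertex and returns to it further on; `K` occupies consecutive places of it. -/
def HasBypass (G : SimpleGraph V) (K : Finset V) (m : ℕ) (x : ℕ → V) (t : ℕ) : Prop :=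
  ∃ (z : ℕ → V) (r e b : ℕ), IsPathSeq G z r ∧ t < b ∧ b < m ∧ z 0 = x t ∧ z (r - 1) = x b ∧
    (∀ i, 0 < i → i + 1 < r → ∀ j, t ≤ j → j < m → z i ≠ x j) ∧ e + K.card < r ∧
    (∀ i, e ≤ i → i < e + K.card → z i ∈ K) ∧ ∀ a ∈ K, ∃ i, e ≤ i ∧ i < e + K.card ∧ z i = a

theorem hasBypass_last (h : ShortCycles G K w d m) (hx : IsPathSeq G x m) {s : ℕ} (hs : x s ∈ K)
    (hsm : s + 1 < m) (hlast : ∀ i, s < i → i < m → x i ∉ K) : HasBypass G K m x s := by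
  classical
  have hcard : 1 < K.card := lt_of_lt_of_le h.two_le h.card_le
  obtain ⟨a, ha, hne⟩ := Finset.exists_mem_ne hcard (x s)
  obtain ⟨y, l, hy, hyA, hyB, hyv, hyA', hyB'⟩ := h.noCut.exists_path (x s) {a | a ∈ K}
    {a | ∃ i, s < i ∧ i < m ∧ x i = a} ⟨a, ha, hne⟩
    ⟨x (s + 1), ⟨s + 1, by omega, hsm, rfl⟩, fun hc => by
      have := hx.inj _ _ hsm (by omega) hc; omega⟩
  obtain ⟨b, hsb, hbm, hb⟩ := hyB
  have hl : l ≠ 0 := by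
    rintro rfl
    exact hlast b hsb hbm (hb ▸ hyA)
  obtain ⟨f, hf1, hf2, hf3, hf4, hf5⟩ := exists_enumeration K hs hyA (hyv 0 (by omega)).symm
  have hf : IsPathSeq G f K.card := ⟨hf1, fun i hi =>
    h.clique _ (hf2 _ (by omega)) _ (hf2 _ hi) fun hc => by
      have := hf1 _ _ (by omega) hi hc; omega⟩
  have hcat := hf.cat (hy.drop (a := l) 1 (by omega))
    (fun _ _ => by rw [hf5]; exact hy.adj 0 (by omega))
    (fun i j hi hj hc => hyA' (1 + j) (by omega) (by omega) (hc ▸ hf2 i hi))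
  refine ⟨_, _, 0, b, hcat, hsb, hbm, by rw [catSeq_of_lt (by omega), hf4], ?_, ?_, by omega,
    fun i _ hi => ?_, fun a ha => ?_⟩
  · rw [catSeq_of_le (by omega), hb]
    congr 1
    omega
  · intro i hi hir j hj hjm
    rcases lt_or_ge i K.card with hc | hc
    · rw [catSeq_of_lt hc]
      rcases eq_or_lt_of_le hj with rfl | hj
      · intro he
        rw [← hf4] at he
        have := hf1 _ _ hc (by omega) he
        omega
      · exact fun he => hlast j hj hjm (he ▸ hf2 i hc)
    · rw [catSeq_of_le hc]
      rcases eq_or_lt_of_le hj with rfl | hj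
      · exact hyv _ (by omega)
      · exact fun he => hyB' (1 + (i - K.card)) (by omega) ⟨j, hj, hjm, he.symm⟩
  · rw [catSeq_of_lt (by omega)]; exact hf2 _ (by omega)
  · obtain ⟨i, hi, he⟩ := hf3 a ha
    exact ⟨i, by omega, by omega, by rw [catSeq_of_lt hi, he]⟩

theorem HasBypass.succ (h : ShortCycles G K w d m) (hx : IsPathSeq G x m) {t : ℕ}
    (htm : t + 2 < m) (ht : HasBypass G K m x t) : HasBypass G K m x (t + 1) := by
  obtain ⟨z, r, e, b, hz, htb, hbm, hz0, hzr, hav, her, hzK, hKz⟩ := ht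
  have hcard : 1 < K.card := lt_of_lt_of_le h.two_le h.card_le
  have hxne : ∀ i j, i < m → j < m → i ≠ j → x i ≠ x j := fun i j hi hj hij hc =>
    hij (hx.inj i j hi hj hc)
  have hzx : ∀ i, i + 1 < r → ∀ j, t < j → j < m → z i ≠ x j := by
    intro i hi j hj hjm
    rcases Nat.eq_zero_or_pos i with rfl | hi0
    · rw [hz0]; exact hxne _ _ (by omega) hjm (by omega)
    · exact hav i hi0 hi j (by omega) hjm
  rcases eq_or_lt_of_le (Nat.succ_le_of_lt htb) with hb | hb
  · obtain rfl : b = t + 1 := hb.symm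
    obtain ⟨y, l, hy, hyA, hyB, hyv, hyA', hyB'⟩ := h.noCut.exists_path (x (t + 1))
      {a | ∃ i, i + 1 < r ∧ z i = a} {a | ∃ i, t + 1 < i ∧ i < m ∧ x i = a}
      ⟨z 0, ⟨0, by omega, rfl⟩, hzx 0 (by omega) _ (by omega) hbm⟩
      ⟨x (t + 2), ⟨t + 2, by omega, htm, rfl⟩, hxne _ _ htm hbm (by omega)⟩
    obtain ⟨i, hir, hi⟩ := hyA
    obtain ⟨b, htb', hbm', hb⟩ := hyB
    have hl : l ≠ 0 := by
      rintro rfl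
      exact hzx i hir b (by omega) hbm' (hi.trans hb.symm)
    have hyz : ∀ j k, 0 < j → j ≤ l → k < r → z k ≠ y j := by
      intro j k hj hjl hk hc
      rcases Nat.lt_or_ge (k + 1) r with hk' | hk'
      · exact hyA' j hj hjl ⟨k, hk', hc⟩
      · obtain rfl : k = r - 1 := by omega
        exact hyv j hjl (by rw [← hc, hzr])
    have hyx : ∀ j, 0 < j → j < l → ∀ k, t + 1 ≤ k → k < m → y j ≠ x k := by
      intro j hj hjl k hk hkm
      rcases eq_or_lt_of_le hk with rfl | hk
      · exact hyv j (by omega)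
      · exact fun hc => hyB' j hjl ⟨k, hk, hkm, hc.symm⟩
    rcases Nat.lt_or_ge e i with hei | hei
    · -- follow `x (t + 1), z 0, …` through `K`, then the ear
      obtain ⟨z', i', hz', hi', hei', hi'r, hz'0, hz'i, hrange, hz'K⟩ : ∃ (z' : ℕ → V) (i' : ℕ),
          IsPathSeq G z' (i' + 1) ∧ z' i' = z i ∧ e + K.card ≤ i' + 1 ∧ i' + 1 < r ∧
          z' 0 = z 0 ∧ (∀ k ≤ i', ∃ k', k' + 1 < r ∧ z' k = z k') ∧
          (∀ k, e ≤ k → k < e + K.card → z' k ∈ K) ∧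
          ∀ a ∈ K, ∃ k, e ≤ k ∧ k < e + K.card ∧ z' k = a := by
        rcases Nat.lt_or_ge (i + 1) (e + K.card) with hc | hc
        · have hsw := (hz.take (a := e + K.card) (by omega)).swap (e := e) (f := e + K.card)
            (p := i) (q := e + K.card - 1)
            (fun i j h1 h2 h3 h4 hij => h.clique _ (hzK i h1 h2) _ (hzK j h3 h4) fun hc =>
              hij (hz.inj _ _ (by omega) (by omega) hc)) (by omega) (by omega) (by omega)
            (by omega) le_rfl (by omega) (by omega)
          have hlt : ∀ k, e ≤ k → k < e + K.card →
              e ≤ Equiv.swap i (e + K.card - 1) k ∧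
              Equiv.swap i (e + K.card - 1) k < e + K.card := by
            intro k h1 h2
            rw [Equiv.swap_apply_def]
            split_ifs <;> omega
          refine ⟨_, e + K.card - 1, by rwa [Nat.sub_add_cancel (by omega)], by simp, by omega,
            by omega, ?_, fun k hk => ⟨_, ?_, rfl⟩, fun k h1 h2 => ?_, fun a ha => ?_⟩
          · rw [Equiv.swap_apply_of_ne_of_ne] <;> omega
          · rw [Equiv.swap_apply_def]
            split_ifs <;> omega
          · exact hzK _ (hlt k h1 h2).1 (hlt k h1 h2).2
          · obtain ⟨k, h1, h2, hk⟩ := hKz a ha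
            exact ⟨_, (hlt k h1 h2).1, (hlt k h1 h2).2, by simpa using hk⟩
        · exact ⟨z, i, hz.take (by omega), rfl, hc, hir, rfl, fun k hk => ⟨k, by omega, rfl⟩,
            hzK, hKz⟩
      have h1 := ((IsPathSeq.const (G := G) (x (t + 1))).cat hz'
        (fun _ _ => by rw [hz'0, hz0]; exact (hx.adj t (by omega)).symm) (by
          intro _ k _ hk hc
          obtain ⟨k', hk', hk''⟩ := hz'i k (by omega)
          exact hzx k' hk' (t + 1) (by omega) hbm (by rw [← hk'', ← hc]))).cat
        (hy.drop (a := l) 1 (by omega))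
        (fun _ _ => by
          rw [catSeq_of_le (by omega), show 1 + (i' + 1) - 1 - 1 = i' by omega, hi', hi]
          exact hy.adj 0 (by omega))
        (by
          intro k j hk hj
          rcases Nat.lt_or_ge k 1 with hk1 | hk1
          · rw [catSeq_of_lt hk1]
            exact (hyv _ (by omega)).symm
          · rw [catSeq_of_le hk1]
            obtain ⟨k', hk', hk''⟩ := hz'i (k - 1) (by omega)
            rw [hk'']
            exact hyz _ _ (by omega) (by omega) (by omega))
      refine ⟨_, _, e + 1, b, h1, htb', hbm', ?_, ?_, ?_, by omega, ?_, ?_⟩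
      · rw [catSeq_of_lt (by omega), catSeq_of_lt (by omega)]
      · rw [catSeq_of_le (by omega), hb]
        congr 1
        omega
      · intro k hk hkr j hj hjm
        rcases Nat.lt_or_ge k (1 + (i' + 1)) with hc | hc
        · rw [catSeq_of_lt hc, catSeq_of_le (by omega)]
          obtain ⟨k', hk', hk''⟩ := hz'i (k - 1) (by omega)
          rw [hk'']
          exact hzx _ hk' _ (by omega) hjm
        · rw [catSeq_of_le hc]
          exact hyx _ (by omega) (by omega) _ hj hjm
      · intro k hk1 hk2
        rw [catSeq_of_lt (by omega), catSeq_of_le (by omega)]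
        exact hrange _ (by omega) (by omega)
      · intro a ha
        obtain ⟨k, hk1, hk2, hk⟩ := hz'K a ha
        refine ⟨k + 1, by omega, by omega, ?_⟩
        rw [catSeq_of_lt (by omega), catSeq_of_le (by omega), Nat.add_sub_cancel, hk]
    · -- follow `z` backwards through `K`, then the ear
      have h1 := (hz.backwards (a := r - i) (r - 1) (by omega) (by omega)).cat
        (hy.drop (a := l) 1 (by omega))
        (fun _ _ => by
          rw [show r - 1 - (r - i - 1) = i by omega, hi]
          exact hy.adj 0 (by omega))
        (fun k j hk hj => hyz _ _ (by omega) (by omega) (by omega))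
      refine ⟨_, _, r - e - K.card, b, h1, htb', hbm', ?_, ?_, ?_, by omega, ?_, ?_⟩
      · rw [catSeq_of_lt (by omega), Nat.sub_zero, hzr]
      · rw [catSeq_of_le (by omega), hb]
        congr 1
        omega
      · intro k hk hkr j hj hjm
        rcases Nat.lt_or_ge k (r - i) with hc | hc
        · rw [catSeq_of_lt hc]
          exact hzx _ (by omega) _ (by omega) hjm
        · rw [catSeq_of_le hc]
          exact hyx _ (by omega) (by omega) _ hj hjm
      · intro k hk1 hk2
        rw [catSeq_of_lt (by omega)]
        exact hzK _ (by omega) (by omega)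
      · intro a ha
        obtain ⟨k, hk1, hk2, hk⟩ := hKz a ha
        refine ⟨r - 1 - k, by omega, by omega, ?_⟩
        rw [catSeq_of_lt (by omega), ← hk]
        congr 1
        omega
  · have h1 := (IsPathSeq.const (G := G) (x (t + 1))).cat hz
      (fun _ _ => by rw [hz0]; exact (hx.adj t (by omega)).symm) (by
        intro _ k _ hk hc
        rcases Nat.lt_or_ge (k + 1) r with hk' | hk'
        · exact hzx k hk' (t + 1) (by omega) (by omega) hc.symm
        · obtain rfl : k = r - 1 := by omega
          exact hxne _ _ (by omega) hbm (by omega) (hc.trans hzr))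
    refine ⟨_, _, e + 1, b, h1, hb, hbm, ?_, ?_, ?_, by omega, ?_, ?_⟩
    · rw [catSeq_of_lt (by omega)]
    · rw [catSeq_of_le (by omega), ← hzr]
      congr 1
      omega
    · intro k hk hkr j hj hjm
      rw [catSeq_of_le (by omega)]
      exact hzx _ (by omega) _ (by omega) hjm
    · intro k hk1 hk2
      rw [catSeq_of_le (by omega)]
      exact hzK _ (by omega) (by omega)
    · intro a ha
      obtain ⟨k, hk1, hk2, hk⟩ := hKz a ha
      refine ⟨k + 1, by omega, by omega, ?_⟩
      rw [catSeq_of_le (by omega), Nat.add_sub_cancel, hk]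

end ShortCycles

theorem exists_greatest_lt {P : ℕ → Prop} {a b : ℕ} (hab : a < b) (ha : P a) :
    ∃ g, a ≤ g ∧ g < b ∧ P g ∧ ∀ i, g < i → i < b → ¬ P i := by
  classical
  refine ⟨Nat.findGreatest P (b - 1), Nat.le_findGreatest (by omega) ha, ?_,
    Nat.findGreatest_spec (m := a) (by omega) ha, fun i h1 h2 =>
      Nat.findGreatest_is_greatest h1 (by omega)⟩
  have := Nat.findGreatest_le (P := P) (b - 1)
  omega

theorem exists_least {P : ℕ → Prop} {a : ℕ} (ha : P a) :
    ∃ g, g ≤ a ∧ P g ∧ ∀ i, i < g → ¬ P i := by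
  classical
  exact ⟨Nat.find ⟨a, ha⟩, Nat.find_min' _ ha, Nat.find_spec ⟨a, ha⟩, fun i hi => Nat.find_min _ hi⟩

theorem IsPathSeq.card_filter_mem {V : Type*} [DecidableEq V] {G : SimpleGraph V} {x : ℕ → V}
    {m : ℕ} (hx : IsPathSeq G x m) (S : Finset V) (hS : ∀ a ∈ S, ∃ i < m, x i = a) :
    ((Finset.range m).filter (fun i => x i ∈ S)).card = S.card := by
  rw [← Finset.card_image_of_injOn (f := x)]
  · congr 1
    ext a
    simp only [Finset.mem_image, Finset.mem_filter, Finset.mem_range]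
    constructor
    · rintro ⟨i, hi, rfl⟩; exact hi.2
    · intro ha
      obtain ⟨i, hi, rfl⟩ := hS a ha
      exact ⟨i, ⟨hi, ha⟩, rfl⟩
  · intro i hi j hj
    simp only [Finset.coe_filter, Finset.mem_range, Set.mem_ofPred_eq] at hi hj
    exact hx.inj i j hi.1 hj.1

namespace ShortCycles

variable {V : Type*} {G : SimpleGraph V} {K : Finset V} {w d m : ℕ} {x : ℕ → V}

theorem ne_last_of_adj {p : ℕ}
    (h : G.Adj (x (m - 1)) (x p)) : p ≠ m - 1 := by
  rintro rfl
  exact h.ne rfl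

/-- The path obtained by turning around the final segment after the vertex of index `p`. -/
def rotate (x : ℕ → V) (m p : ℕ) : ℕ → V := fun i => if i ≤ p then x i else x (m + p - i)

theorem rotate_of_le {p i : ℕ} (hi : i ≤ p) : rotate x m p i = x i := if_pos hi

theorem rotate_of_lt {p i : ℕ} (hi : p < i) : rotate x m p i = x (m + p - i) :=
  if_neg (Nat.not_le.2 hi)

theorem isPathSeq_rotate (hx : IsPathSeq G x m) {p : ℕ} (hpm : p + 1 < m)
    (hp : G.Adj (x (m - 1)) (x p)) : IsPathSeq G (rotate x m p) m := by
  have hc := (hx.take (a := p + 1) (by omega)).cat (hx.backwards (a := m - 1 - p) (m - 1)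
    (by omega) (by omega)) (fun _ _ => hp.symm) (fun i j hi hj hc => by
      have := hx.inj _ _ (by omega) (by omega) hc
      omega)
  rw [show p + 1 + (m - 1 - p) = m by omega] at hc
  refine hc.congr fun i hi => ?_
  rcases Nat.lt_or_ge i (p + 1) with h1 | h1
  · rw [catSeq_of_lt h1, rotate_of_le (by omega)]
  · rw [catSeq_of_le h1, rotate_of_lt (by omega)]
    congr 1
    omega

theorem rotate_last {p : ℕ} (hpm : p + 1 < m) : rotate x m p (m - 1) = x (p + 1) := by
  rw [rotate_of_lt (by omega)]
  congr 1
  omega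

theorem rotate_zero_mem (h0 : x 0 ∈ K) (p : ℕ) : rotate x m p 0 ∈ K := by
  rwa [rotate_of_le (by omega)]

variable [Fintype V]

theorem adj_pred (h : ShortCycles G K w d m) (hx : IsPathSeq G x m) :
    G.Adj (x (m - 1)) (x (m - 2)) := by
  have h3 := h.three_le
  have := hx.adj (m - 2) (by omega)
  rw [show m - 2 + 1 = m - 1 by omega] at this
  exact this.symm

theorem last_not_mem (h : ShortCycles G K w d m) (hx : IsPathSeq G x m) (h0 : x 0 ∈ K) :
    x (m - 1) ∉ K := fun hc => by
  have h3 := h.three_le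
  refine h.not_adj_zero hx (h.clique _ hc _ h0 fun he => ?_)
  have := hx.inj _ _ (by omega) (by omega) he
  omega

theorem exists_crossing (h : ShortCycles G K w d m) (hx : IsPathSeq G x m) (h0 : x 0 ∈ K) :
    ∃ p q, p < q ∧ q < m ∧ G.Adj (x (m - 1)) (x p) ∧ x q ∈ K := by
  classical
  by_contra! hnc
  have h3 := h.three_le
  have hcard : 1 < K.card := lt_of_lt_of_le h.two_le h.card_le
  obtain ⟨s, -, hsm, hs, hsmax⟩ := exists_greatest_lt (P := fun i => x i ∈ K) (b := m)
    (show 0 < m by omega) h0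
  obtain ⟨t, ht2, ht, htmin⟩ := exists_least (P := fun i => G.Adj (x (m - 1)) (x i))
    (h.adj_pred hx)
  have hst : s ≤ t := by
    by_contra hc
    exact hnc t s (by omega) hsm ht hs
  have hby : ∀ k, s ≤ k → k ≤ t → HasBypass G K m x k := by
    intro k hk
    induction k, hk using Nat.le_induction with
    | base => exact fun _ => h.hasBypass_last hx hs (by omega) hsmax
    | succ k hk ih => exact fun hkt => HasBypass.succ h hx (by omega) (ih (by omega))
  obtain ⟨z, r, e, b, hz, htb, hbm, hz0, hzr, hav, her, -, hKz⟩ := hby t hst le_rfl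
  obtain ⟨g, htg, hgb, hg, hgmax⟩ := exists_greatest_lt
    (P := fun i => G.Adj (x (m - 1)) (x i)) htb ht
  have hxne : ∀ i j, i < m → j < m → i ≠ j → x i ≠ x j := fun i j hi hj hij hc =>
    hij (hx.inj i j hi hj hc)
  have hzx : ∀ i, i < r → ∀ j, t < j → j < m → j ≠ b → z i ≠ x j := by
    intro i hi j hj hjm hjb
    rcases Nat.eq_zero_or_pos i with rfl | hi0
    · rw [hz0]; exact hxne _ _ (by omega) hjm (by omega)
    · rcases Nat.lt_or_ge (i + 1) r with hir | hir
      · exact hav i hi0 hir j (by omega) hjm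
      · rw [show i = r - 1 by omega, hzr]; exact hxne _ _ hbm hjm hjb.symm
  have h1 := (hz.cat (hx.drop (a := m - 1 - b) (b + 1) (by omega))
    (fun _ _ => by rw [hzr]; exact hx.adj b (by omega))
    (fun i j hi hj => hzx i hi _ (by omega) (by omega) (by omega)))
  have hend : catSeq z r (fun i => x (b + 1 + i)) (r + (m - 1 - b) - 1) = x (m - 1) := by
    rcases Nat.lt_or_ge b (m - 1) with hc | hc
    · rw [catSeq_of_le (by omega)]
      congr 1
      omega
    · rw [catSeq_of_lt (by omega), show r + (m - 1 - b) - 1 = r - 1 by omega, hzr]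
      congr 1
      omega
  have h2 := h1.cat (hx.backwards (a := g - t) g (by omega) (by omega))
    (fun _ _ => by rw [hend]; exact hg)
    (fun i j hi hj => by
      rcases Nat.lt_or_ge i r with hc | hc
      · rw [catSeq_of_lt hc]
        exact hzx _ hc _ (by omega) (by omega) (by omega)
      · rw [catSeq_of_le hc]
        exact hxne _ _ (by omega) (by omega) (by omega))
  set c := catSeq (catSeq z r fun i => x (b + 1 + i)) (r + (m - 1 - b)) fun i => x (g - i) with hc
  have hcyc : IsCycleSeq G c (r + (m - 1 - b) + (g - t)) := by
    refine ⟨h2, by omega, ?_⟩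
    have hc0 : c 0 = x t := by
      rw [hc, catSeq_of_lt (by omega), catSeq_of_lt (by omega), hz0]
    rw [hc0]
    rcases Nat.lt_or_ge t g with hc' | hc'
    · rw [hc, catSeq_of_le (by omega),
        show g - (r + (m - 1 - b) + (g - t) - 1 - (r + (m - 1 - b))) = t + 1 by omega]
      exact (hx.adj t (by omega)).symm
    · rw [hc, catSeq_of_lt (by omega), show r + (m - 1 - b) + (g - t) - 1 = r + (m - 1 - b) - 1 by
        omega, hend]
      exact ht
  have hlt := h.cycle_lt_add _ _ hcyc
  have himg := h2.card_image
  have hmemc : ∀ i, t ≤ i → i ≤ g ∨ b ≤ i → i < m →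
      x i ∈ (Finset.range (r + (m - 1 - b) + (g - t))).image c := by
    intro i hi hi' him
    rw [Finset.mem_image]
    rcases hi' with hi' | hi'
    · rcases eq_or_lt_of_le hi with rfl | hi
      · exact ⟨0, Finset.mem_range.2 (by omega), by
          rw [hc, catSeq_of_lt (by omega), catSeq_of_lt (by omega), hz0]⟩
      · refine ⟨r + (m - 1 - b) + (g - i), Finset.mem_range.2 (by omega), ?_⟩
        rw [hc, catSeq_of_le (by omega)]
        congr 1
        omega
    · rcases eq_or_lt_of_le hi' with rfl | hi'
      · refine ⟨r - 1, Finset.mem_range.2 (by omega), ?_⟩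
        rw [hc, catSeq_of_lt (by omega), catSeq_of_lt (by omega), hzr]
      · refine ⟨r + (i - b - 1), Finset.mem_range.2 (by omega), ?_⟩
        rw [hc, catSeq_of_lt (by omega), catSeq_of_le (by omega)]
        congr 1
        omega
  have hsub : K ∪ insert (x (m - 1)) (nbrs G (x (m - 1))) ⊆
      (Finset.range (r + (m - 1 - b) + (g - t))).image c := by
    intro a ha
    rw [Finset.mem_union, Finset.mem_insert, mem_nbrs] at ha
    rcases ha with ha | rfl | ha
    · obtain ⟨i, hi1, hi2, rfl⟩ := hKz a ha
      rw [Finset.mem_image]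
      exact ⟨i, Finset.mem_range.2 (by omega), by
        rw [hc, catSeq_of_lt (by omega), catSeq_of_lt (by omega)]⟩
    · exact hmemc _ (by omega) (by omega) (by omega)
    · obtain ⟨i, hi, rfl⟩ := h.exists_index_of_adj hx h0 ha
      refine hmemc i ?_ ?_ hi
      · by_contra hlt
        exact htmin i (by omega) ha
      · by_contra! hlt
        exact hgmax i (by omega) (by omega) ha
  have hinter : K ∩ insert (x (m - 1)) (nbrs G (x (m - 1))) ⊆ {x t} := by
    intro a ha
    rw [Finset.mem_inter, Finset.mem_insert, mem_nbrs] at ha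
    obtain ⟨ha, rfl | ha'⟩ := ha
    · exact absurd ha (h.last_not_mem hx h0)
    · obtain ⟨i, hi, rfl⟩ := h.exists_index_of_adj hx h0 ha'
      have hti : t ≤ i := by
        by_contra hlt
        exact htmin i (by omega) ha'
      have his : i ≤ s := by
        by_contra hlt
        exact hsmax i (by omega) hi ha
      rw [Finset.mem_singleton, show i = t by omega]
  have e1 := Finset.card_union_add_card_inter K (insert (x (m - 1)) (nbrs G (x (m - 1))))
  have e2 := Finset.card_le_card hsub
  have e3 := Finset.card_le_card hinter
  rw [Finset.card_insert_of_notMem (by rw [mem_nbrs]; exact fun hc => hc.ne rfl)] at e1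
  rw [Finset.card_singleton] at e3
  have e4 := h.card_le
  have e5 := h.degree_le (x (m - 1))
  omega

/-- `x p` is a neighbour of the last vertex of the path, `x q` lies in `K`, and no such vertices
lie between them. -/
structure Crossing (G : SimpleGraph V) (K : Finset V) (m : ℕ) (x : ℕ → V) (p q : ℕ) : Prop where
  lt : p < q
  lt_length : q < m
  adj : G.Adj (x (m - 1)) (x p)
  mem : x q ∈ K
  not_mem : ∀ i, p < i → i < q → x i ∉ K
  not_adj : ∀ i, p < i → i < q → ¬ G.Adj (x (m - 1)) (x i)

theorem exists_consecutive_crossing (h : ShortCycles G K w d m) (hx : IsPathSeq G x m)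
    (h0 : x 0 ∈ K) : ∃ p q, Crossing G K m x p q := by
  obtain ⟨p, q, hpq, hq, hp, hqK⟩ := h.exists_crossing hx h0
  obtain ⟨p', hp1, hp2, hp', hmax⟩ := exists_greatest_lt
    (P := fun i => G.Adj (x (m - 1)) (x i)) hpq hp
  obtain ⟨q', hq1, ⟨hq2, hq'⟩, hmin⟩ := exists_least (P := fun i => p' < i ∧ x i ∈ K)
    ⟨hp2, hqK⟩
  exact ⟨p', q', hq2, by omega, hp', hq', fun i h1 h2 h3 => hmin i h2 ⟨h1, h3⟩,
    fun i h1 h2 => hmax i h1 (by omega)⟩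

theorem not_mem_succ (h : ShortCycles G K w d m) (hx : IsPathSeq G x m) (h0 : x 0 ∈ K) {p : ℕ}
    (hpm : p + 1 < m) (hp : G.Adj (x (m - 1)) (x p)) : x (p + 1) ∉ K := by
  intro hK
  have hc := (hx.take (a := p + 1) (by omega)).cat (hx.backwards (a := m - 1 - p) (m - 1)
    (by omega) (by omega)) (fun _ _ => hp.symm) (fun i j hi hj hc => by
      have := hx.inj _ _ (by omega) (by omega) hc
      omega)
  have := h.cycle_lt _ _ ⟨hc, by have := h.three_le; omega, by
    rw [catSeq_of_le (by omega), catSeq_of_lt (by omega),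
      show m - 1 - (p + 1 + (m - 1 - p) - 1 - (p + 1)) = p + 1 by omega]
    refine h.clique _ hK _ h0 fun he => ?_
    have := hx.inj _ _ (by omega) (by omega) he
    omega⟩
  omega

theorem Crossing.cycle (h : ShortCycles G K w d m) (hx : IsPathSeq G x m) (h0 : x 0 ∈ K)
    {p q : ℕ} (hpq : Crossing G K m x p q) : p + 1 + (m - q) < w + d := by
  have hlt := hpq.lt
  have hqm := hpq.lt_length
  have hp0 : p ≠ 0 := by
    rintro rfl
    exact h.not_adj_zero hx hpq.adj
  have hc := (hx.take (a := p + 1) (by omega)).cat (hx.backwards (a := m - q) (m - 1)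
    (by omega) (by omega)) (fun _ _ => hpq.adj.symm) (fun i j hi hj hc => by
      have := hx.inj _ _ (by omega) (by omega) hc
      omega)
  exact h.cycle_lt_add _ _ ⟨hc, by omega, by
    rw [catSeq_of_le (by omega), catSeq_of_lt (by omega),
      show m - 1 - (p + 1 + (m - q) - 1 - (p + 1)) = q by omega]
    refine h.clique _ hpq.mem _ h0 fun he => ?_
    have := hx.inj _ _ (by omega) (by omega) he
    omega⟩

theorem Crossing.tight (h : ShortCycles G K w d m) (hx : IsPathSeq G x m) (h0 : x 0 ∈ K)
    {p q : ℕ} (hpq : Crossing G K m x p q) :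
    p + 2 + (m - q) = w + d ∧ K.card = w ∧ (nbrs G (x (m - 1))).card = d ∧ p + 2 ≤ q ∧
      ∀ i, i < m → i ≤ p ∨ q ≤ i + 1 → i + 1 < m → x (i + 1) ∈ K ∨ G.Adj (x (m - 1)) (x i) := by
  classical
  have hlt := hpq.lt
  have hqm := hpq.lt_length
  have hcyc := hpq.cycle h hx h0
  have hw := h.card_le
  have hd := h.degree_le (x (m - 1))
  have hq2 : p + 2 ≤ q := by
    by_contra hc
    exact h.not_mem_succ hx h0 (by omega) hpq.adj (by rw [show p + 1 = q by omega]; exact hpq.mem)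
  set N1 := (Finset.range m).filter (fun i => x i ∈ K) with hN1
  set N2 := (Finset.range m).filter (fun i => x i ∈ nbrs G (x (m - 1))) with hN2
  have c1 : N1.card = K.card := hx.card_filter_mem K fun a ha => h.exists_index_of_mem hx h0 ha
  have c2 : N2.card = (nbrs G (x (m - 1))).card := hx.card_filter_mem _ fun a ha =>
    h.exists_index_of_adj hx h0 (mem_nbrs.1 ha)
  have c3 : (N1.erase 0).card + 1 = N1.card :=
    Finset.card_erase_add_one (by simp [hN1, h0]; omega)
  have c4 : (N2.image (· + 1)).card = N2.card :=
    Finset.card_image_of_injective _ fun a b hab => by simpa using hab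
  have hdisj : Disjoint (N1.erase 0) (N2.image (· + 1)) := by
    rw [Finset.disjoint_left]
    intro a ha hb
    simp only [hN1, hN2, Finset.mem_erase, Finset.mem_filter, Finset.mem_range, Finset.mem_image,
      mem_nbrs] at ha hb
    obtain ⟨i, ⟨hi, hadj⟩, rfl⟩ := hb
    exact h.not_mem_succ hx h0 ha.2.1 hadj ha.2.2
  have hsub : N1.erase 0 ∪ N2.image (· + 1) ⊆ Finset.Ico 1 (p + 2) ∪ Finset.Ico q m := by
    intro a ha
    simp only [hN1, hN2, Finset.mem_union, Finset.mem_erase, Finset.mem_filter, Finset.mem_range,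
      Finset.mem_image, mem_nbrs, Finset.mem_Ico] at ha ⊢
    rcases ha with ⟨ha0, ham, haK⟩ | ⟨i, ⟨hi, hadj⟩, rfl⟩
    · have : ¬ (p < a ∧ a < q) := fun hc => hpq.not_mem a hc.1 hc.2 haK
      omega
    · have : ¬ (p < i ∧ i < q) := fun hc => hpq.not_adj i hc.1 hc.2 hadj
      have := ne_last_of_adj hadj
      omega
  have c5 : (Finset.Ico 1 (p + 2) ∪ Finset.Ico q m).card = p + 1 + (m - q) := by
    rw [Finset.card_union_of_disjoint]
    · simp
    · rw [Finset.disjoint_left]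
      intro a ha hb
      rw [Finset.mem_Ico] at ha hb
      omega
  have c6 := Finset.card_union_of_disjoint hdisj
  have c7 := Finset.card_le_card hsub
  refine ⟨by omega, by omega, by omega, hq2, fun i hi hi' him => ?_⟩
  have heq := Finset.eq_of_subset_of_card_le hsub (by omega)
  have : i + 1 ∈ Finset.Ico 1 (p + 2) ∪ Finset.Ico q m := by
    rw [Finset.mem_union, Finset.mem_Ico, Finset.mem_Ico]
    omega
  rw [← heq] at this
  simp only [hN1, hN2, Finset.mem_union, Finset.mem_erase, Finset.mem_filter, Finset.mem_range,
    Finset.mem_image, mem_nbrs] at this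
  rcases this with ha | ⟨j, ⟨hj, hadj⟩, hji⟩
  · exact Or.inl ha.2.2
  · obtain rfl : j = i := by omega
    exact Or.inr hadj

/-- The vertices of `K` form an initial segment of the path up to the first neighbour `x s` of the
last vertex; after it no two consecutive vertices lie in `K`. -/
theorem exists_initial (h : ShortCycles G K w d m) (hx : IsPathSeq G x m) (h0 : x 0 ∈ K) :
    ∃ s, 0 < s ∧ s + 2 < m ∧ G.Adj (x (m - 1)) (x s) ∧
      (∀ i < s, ¬ G.Adj (x (m - 1)) (x i)) ∧ (∀ i ≤ s, x i ∈ K) ∧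
      ∀ i, s ≤ i → i + 1 < m → x i ∈ K → x (i + 1) ∉ K := by
  obtain ⟨p, q, hpq⟩ := h.exists_consecutive_crossing hx h0
  have hlt := hpq.lt
  have hqm := hpq.lt_length
  obtain ⟨-, -, -, hpq2, hcov⟩ := hpq.tight h hx h0
  obtain ⟨s, hsp, hs, hmin⟩ := exists_least (P := fun i => G.Adj (x (m - 1)) (x i)) hpq.adj
  have hs0 : s ≠ 0 := by
    rintro rfl
    exact h.not_adj_zero hx hs
  have hqm' : q ≠ m - 1 := by
    rintro rfl
    exact h.last_not_mem hx h0 hpq.mem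
  have hinit : ∀ i ≤ s, x i ∈ K := by
    intro i hi
    rcases Nat.eq_zero_or_pos i with rfl | hi0
    · exact h0
    · have := hcov (i - 1) (by omega) (by omega) (by omega)
      rw [show i - 1 + 1 = i by omega] at this
      exact this.resolve_right (hmin _ (by omega))
  refine ⟨s, by omega, by omega, hs, hmin, hinit, fun a hsa ham haK haK' => ?_⟩
  have hne : ∀ i j, i < m → j < m → i ≠ j → x i ≠ x j := fun i j hi hj hij hc =>
    hij (hx.inj i j hi hj hc)
  have hc := (((hx.drop (a := a + 1 - s) s (by omega)).cat (hx.take (a := s) (by omega))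
    (fun _ _ => h.clique _ (by rw [show s + (a + 1 - s - 1) = a by omega]; exact haK) _ h0
      (hne _ _ (by omega) (by omega) (by omega)))
    (fun i j hi hj => hne _ _ (by omega) (by omega) (by omega))).cat
    (hx.drop (a := m - (a + 1)) (a + 1) (by omega))
    (fun _ _ => by
      rw [catSeq_of_le (by omega)]
      refine h.clique _ (hinit _ (by omega)) _ haK' (hne _ _ (by omega) (by omega) (by omega)))
    (fun i j hi hj => by
      rcases Nat.lt_or_ge i (a + 1 - s) with hc | hc
      · rw [catSeq_of_lt hc]
        exact hne _ _ (by omega) (by omega) (by omega)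
      · rw [catSeq_of_le hc]
        exact hne _ _ (by omega) (by omega) (by omega)))
  have := h.cycle_lt _ _ ⟨hc, by omega, by
    rw [catSeq_of_le (by omega), catSeq_of_lt (by omega), catSeq_of_lt (by omega),
      show a + 1 + (a + 1 - s + s + (m - (a + 1)) - 1 - (a + 1 - s + s)) = m - 1 by omega]
    exact hs⟩
  omega

end ShortCycles

/-- Two terms of an initial clique segment can be brought to the front. -/
theorem IsPathSeq.exists_bring_front {V : Type*} {G : SimpleGraph V} {x : ℕ → V} {m s i j : ℕ}
    (hx : IsPathSeq G x m) (hsm : s < m)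
    (hK : ∀ a b, a ≤ s → b ≤ s → a ≠ b → G.Adj (x a) (x b)) (hi : i < s) (hj : j < s)
    (hij : i ≠ j) :
    ∃ x', IsPathSeq G x' m ∧ x' 0 = x i ∧ x' 1 = x j ∧ (∀ k, s ≤ k → x' k = x k) ∧
      ∀ k < s, ∃ l < s, x' k = x l := by
  have hlt : ∀ p q k, p < s → q < s → k ≤ s → Equiv.swap p q k ≤ s := by
    intro p q k hp hq hk
    rw [Equiv.swap_apply_def]
    split_ifs <;> omega
  have hlt' : ∀ p q k, p < s → q < s → k < s → Equiv.swap p q k < s := by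
    intro p q k hp hq hk
    rw [Equiv.swap_apply_def]
    split_ifs <;> omega
  have hfix : ∀ p q k, p < s → q < s → s ≤ k → Equiv.swap p q k = k := by
    intro p q k hp hq hk
    rw [Equiv.swap_apply_def]
    split_ifs <;> omega
  have h1 := hx.swap (e := 0) (f := s + 1) (p := 0) (q := i)
    (fun a b _ ha _ hb hab => hK a b (by omega) (by omega) hab) (by omega) (by omega) (by omega)
    (by omega) (by omega) (by omega) (by omega)
  have hj' : Equiv.swap 0 i j < s := hlt' _ _ _ (by omega) hi hj
  have hj0 : Equiv.swap 0 i j ≠ 0 := by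
    intro hc
    exact hij ((Equiv.swap 0 i).injective (by rw [hc, Equiv.swap_apply_right]))
  have h2 := h1.swap (e := 0) (f := s + 1) (p := 1) (q := Equiv.swap 0 i j)
    (fun a b _ ha _ hb hab => hK _ _ (hlt _ _ _ (by omega) hi (by omega))
      (hlt _ _ _ (by omega) hi (by omega)) fun hc => hab ((Equiv.swap 0 i).injective hc))
    (by omega) (by omega) (by omega) (by omega) (by omega) (by omega) (by omega)
  refine ⟨_, h2, ?_, ?_, ?_, ?_⟩
  · rw [Equiv.swap_apply_of_ne_of_ne (by omega) hj0.symm, Equiv.swap_apply_left]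
  · rw [Equiv.swap_apply_left, Equiv.swap_apply_self]
  · intro k hk
    rw [hfix _ _ _ (by omega) hj' hk, hfix _ _ _ (by omega) hi hk]
  · exact fun k hk => ⟨_, hlt' _ _ _ (by omega) hi (hlt' _ _ _ (by omega) hj' hk), rfl⟩

namespace ShortCycles

variable {V : Type*} [Fintype V] {G : SimpleGraph V} {K : Finset V} {w d m : ℕ} {x : ℕ → V}

theorem not_insert (h : ShortCycles G K w d m) (hx : IsPathSeq G x m) (h0 : x 0 ∈ K) {f : V}
    (hf : ∀ i < m, x i ≠ f) {i : ℕ} (him : i + 1 < m) (h1 : G.Adj f (x i)) :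
    ¬ G.Adj f (x (i + 1)) := by
  intro h2
  have hc := ((hx.take (a := i + 1) (by omega)).cat (IsPathSeq.const f) (fun _ _ => h1.symm)
    (fun a b ha hb => hf _ (by omega))).cat (hx.drop (a := m - (i + 1)) (i + 1) (by omega))
    (fun _ _ => by rw [catSeq_of_le (by omega)]; exact h2)
    (fun a b ha hb => by
      rcases Nat.lt_or_ge a (i + 1) with hc | hc
      · rw [catSeq_of_lt hc]
        intro he
        have := hx.inj _ _ (by omega) (by omega) he
        omega
      · rw [catSeq_of_le hc]
        exact (hf _ (by omega)).symm)
  have := h.longest _ _ hc (by omega)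
    (by rwa [catSeq_of_lt (by omega), catSeq_of_lt (by omega)])
  omega

theorem cover (h : ShortCycles G K w d m) (hm : m = w + d) (hx : IsPathSeq G x m) (h0 : x 0 ∈ K)
    {i : ℕ} (hi : i + 1 < m) : x (i + 1) ∈ K ∨ G.Adj (x (m - 1)) (x i) := by
  obtain ⟨p, q, hpq⟩ := h.exists_consecutive_crossing hx h0
  have hlt := hpq.lt
  have hqm := hpq.lt_length
  obtain ⟨h1, -, -, -, hcov⟩ := hpq.tight h hx h0
  exact hcov i (by omega) (by omega) hi

theorem penultimate_mem (h : ShortCycles G K w d m) (hm : m = w + d) (hx : IsPathSeq G x m)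
    (h0 : x 0 ∈ K) : x (m - 2) ∈ K := by
  obtain ⟨p, q, hpq⟩ := h.exists_consecutive_crossing hx h0
  have hlt := hpq.lt
  have hqm := hpq.lt_length
  obtain ⟨h1, -, -, h2, -⟩ := hpq.tight h hx h0
  have hr := isPathSeq_rotate hx (by omega) hpq.adj
  have := h.cover hm hr (rotate_zero_mem h0 p) (i := p + 1) (by omega)
  rw [rotate_last (by omega), rotate_of_lt (by omega), rotate_of_lt (by omega),
    show m + p - (p + 1 + 1) = m - 2 by omega, show m + p - (p + 1) = m - 1 by omega] at this
  exact this.resolve_right fun hc => hpq.not_adj (p + 1) (by omega) (by omega) hc.symm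

theorem mem_add_two (h : ShortCycles G K w d m) (hm : m = w + d) (hx : IsPathSeq G x m)
    (h0 : x 0 ∈ K) {p : ℕ} (hpm : p + 2 < m) (hp : G.Adj (x (m - 1)) (x p)) : x (p + 2) ∈ K := by
  have hr := isPathSeq_rotate hx (by omega) hp
  have := h.penultimate_mem hm hr (rotate_zero_mem h0 p)
  rwa [rotate_of_lt (by omega), show m + p - (m - 2) = p + 2 by omega] at this

/-- If the longest paths starting in `K` have exactly `w + d` vertices, then the neighbours of
the end of such a path are the vertices of `K` outside the initial segment. -/
theorem adj_last_iff (h : ShortCycles G K w d m) (hm : m = w + d) (hx : IsPathSeq G x m)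
    (h0 : x 0 ∈ K) : d < w ∧ (∀ i ≤ w - d, x i ∈ K) ∧
    G.Adj (x (m - 1)) (x (w - d)) ∧ w - d + 2 < m ∧
    (∀ i, w - d ≤ i → i + 1 < m → x i ∈ K → x (i + 1) ∉ K) ∧
    ∀ z, G.Adj (x (m - 1)) z ↔ z ∈ K ∧ ∀ i < w - d, x i ≠ z := by
  classical
  obtain ⟨p, q, hpq⟩ := h.exists_consecutive_crossing hx h0
  obtain ⟨-, hKw, hNd, -, -⟩ := hpq.tight h hx h0
  obtain ⟨s, hs0, hsm, hs, hmin, hinit, halt⟩ := h.exists_initial hx h0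
  have hlast := h.last_not_mem hx h0
  have key : ∀ i, s ≤ i → i < m → (G.Adj (x (m - 1)) (x i) ↔ x i ∈ K) := by
    intro i hsi him
    constructor
    · intro hadj
      have hne := ne_last_of_adj hadj
      by_contra hiK
      have hsi' : i ≠ s := by
        rintro rfl
        exact hiK (hinit _ le_rfl)
      have hc := (h.cover hm hx h0 (i := i - 1) (by omega)).resolve_left
        (by rwa [show i - 1 + 1 = i by omega])
      have h2 := h.mem_add_two hm hx h0 (by omega) hc
      rw [show i - 1 + 2 = i + 1 by omega] at h2
      exact h.not_mem_succ hx h0 (by omega) hadj h2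
    · intro hiK
      have hne : i ≠ m - 1 := by
        rintro rfl
        exact hlast hiK
      exact (h.cover hm hx h0 (by omega)).resolve_left (halt i hsi (by omega) hiK)
  have hiff : ∀ z, G.Adj (x (m - 1)) z ↔ z ∈ K ∧ ∀ i < s, x i ≠ z := by
    intro z
    constructor
    · intro hadj
      obtain ⟨i, hi, rfl⟩ := h.exists_index_of_adj hx h0 hadj
      have hsi : s ≤ i := by
        by_contra hc
        exact hmin i (by omega) hadj
      refine ⟨(key i hsi hi).1 hadj, fun j hj he => ?_⟩
      have := hx.inj _ _ (by omega) hi he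
      omega
    · rintro ⟨hzK, hz⟩
      obtain ⟨i, hi, rfl⟩ := h.exists_index_of_mem hx h0 hzK
      refine (key i ?_ hi).2 hzK
      by_contra hc
      exact hz i (by omega) rfl
  have hcard : s + d = w := by
    have hK : K = (Finset.range s).image x ∪ nbrs G (x (m - 1)) := by
      ext z
      simp only [Finset.mem_union, Finset.mem_image, Finset.mem_range, mem_nbrs, hiff]
      constructor
      · intro hz
        by_cases hc : ∃ i < s, x i = z
        · exact Or.inl hc
        · push Not at hc
          exact Or.inr ⟨hz, hc⟩
      · rintro (⟨i, hi, rfl⟩ | hz)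
        · exact hinit i hi.le
        · exact hz.1
    rw [← hKw, hK, Finset.card_union_of_disjoint, hNd, (hx.take (a := s) (by omega)).card_image]
    rw [Finset.disjoint_left]
    intro z hz hz'
    simp only [Finset.mem_image, Finset.mem_range, mem_nbrs, hiff] at hz hz'
    obtain ⟨i, hi, he⟩ := hz
    exact hz'.2 i hi he
  obtain rfl : s = w - d := by omega
  exact ⟨by omega, hinit, hs, hsm, halt, hiff⟩

theorem adj_iff_adj_last (h : ShortCycles G K w d m) (hm : m = w + d) (hx : IsPathSeq G x m)
    (h0 : x 0 ∈ K) {i : ℕ} (hi : i < m) (hiK : x i ∉ K) (z : V) :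
    G.Adj (x i) z ↔ G.Adj (x (m - 1)) z := by
  obtain ⟨hdw, hinit, -, -, -, hiff⟩ := h.adj_last_iff hm hx h0
  rcases eq_or_ne i (m - 1) with rfl | hne
  · rfl
  · have hsi : w - d < i := by
      by_contra hc
      exact hiK (hinit i (by omega))
    have hadj := (h.cover hm hx h0 (i := i - 1) (by omega)).resolve_left
      (by rwa [show i - 1 + 1 = i by omega])
    have hr := isPathSeq_rotate hx (by omega) hadj
    obtain ⟨-, -, -, -, -, hiff'⟩ := h.adj_last_iff hm hr (rotate_zero_mem h0 _)
    have := hiff' z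
    rw [rotate_last (by omega), show i - 1 + 1 = i by omega] at this
    rw [this, hiff]
    refine and_congr_right fun _ => forall₂_congr fun j hj => ?_
    rw [rotate_of_le (by omega)]

theorem adj_iff_of_last (h : ShortCycles G K w d m) (hm : m = w + d) (hx : IsPathSeq G x m)
    (h0 : x 0 ∈ K) {f : V} {x' : ℕ → V} (hx' : IsPathSeq G x' m) (h0' : x' 0 ∈ K)
    (hf : x' (m - 1) = f) (z : V) : G.Adj f z ↔ G.Adj (x (m - 1)) z := by
  classical
  have hfK : f ∉ K := hf ▸ h.last_not_mem hx' h0'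
  by_cases hP : ∃ i < m, x i = f
  · obtain ⟨i, hi, rfl⟩ := hP
    exact h.adj_iff_adj_last hm hx h0 hi hfK z
  push Not at hP
  obtain ⟨hdw, hinit, hs, hsm, halt, hiff⟩ := h.adj_last_iff hm hx h0
  obtain ⟨-, -, -, -, -, hiff'⟩ := h.adj_last_iff hm hx' h0'
  rw [hf] at hiff'
  have hcard : ∀ y : ℕ → V, IsPathSeq G y m → y 0 ∈ K → (nbrs G (y (m - 1))).card = d := by
    intro y hy hy0
    obtain ⟨p, q, hpq⟩ := h.exists_consecutive_crossing hy hy0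
    exact (hpq.tight h hy hy0).2.2.1
  have hc1 := hcard x hx h0
  have hc2 := hcard x' hx' h0'
  rw [hf] at hc2
  have hd2 : 1 < d := by
    rw [← hc1, Finset.one_lt_card]
    refine ⟨x (w - d), mem_nbrs.2 hs, x (m - 2), mem_nbrs.2 (h.adj_pred hx), fun he => ?_⟩
    have := hx.inj _ _ (by omega) (by omega) he
    omega
  have hKadj : ∀ a b, a ≤ w - d → b ≤ w - d → a ≠ b → G.Adj (x a) (x b) := fun a b ha hb hab =>
    h.clique _ (hinit a ha) _ (hinit b hb) fun he => hab (hx.inj _ _ (by omega) (by omega) he)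
  have hsub : nbrs G f ⊆ nbrs G (x (m - 1)) := by
    intro a ha
    by_contra hna
    rw [mem_nbrs] at ha
    rw [mem_nbrs, hiff] at hna
    have haK := ((hiff' a).1 ha).1
    push Not at hna
    obtain ⟨i, hi, rfl⟩ := hna haK
    obtain ⟨b, hb, hba⟩ := Finset.exists_mem_ne (hc2 ▸ hd2) (x i)
    rw [mem_nbrs] at hb
    have hbK := ((hiff' b).1 hb).1
    obtain ⟨j, hj, rfl⟩ := h.exists_index_of_mem hx h0 hbK
    have hij : i ≠ j := by
      rintro rfl
      exact hba rfl
    rcases lt_trichotomy j (w - d) with hjs | rfl | hjs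
    · obtain ⟨y, hy, hy0, hy1, hyk, hyl⟩ := hx.exists_bring_front (by omega) hKadj hi hjs hij
      refine h.not_insert hy (by rw [hy0]; exact hinit i hi.le) (f := f) (fun k hk => ?_) (i := 0)
        (by omega) (by rwa [hy0]) (by rwa [hy1])
      rcases Nat.lt_or_ge k (w - d) with hc | hc
      · obtain ⟨l, hl, he⟩ := hyl k hc
        rw [he]
        exact hP l (by omega)
      · rw [hyk k hc]
        exact hP k hk
    · have hsw := hx.swap (e := 0) (f := w - d + 1) (p := i) (q := w - d - 1)
        (fun a b _ ha _ hb hab => hKadj a b (by omega) (by omega) hab) (by omega) (by omega)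
        (by omega) (by omega) (by omega) (by omega) (by omega)
      have hle : ∀ k, k < m → Equiv.swap i (w - d - 1) k < m := by
        intro k hk
        rw [Equiv.swap_apply_def]
        split_ifs <;> omega
      refine h.not_insert hsw (hinit _ ?_) (f := f) (fun k hk => hP _ (hle k hk))
        (i := w - d - 1) (by omega) ?_ ?_
      · rw [Equiv.swap_apply_def]
        split_ifs <;> omega
      · rwa [Equiv.swap_apply_right]
      · rwa [show w - d - 1 + 1 = w - d by omega, Equiv.swap_apply_of_ne_of_ne hij.symm (by omega)]
    · have hj1 : x (j - 1) ∉ K := by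
        intro hc
        refine halt (j - 1) (by omega) (by omega) hc ?_
        rwa [show j - 1 + 1 = j by omega]
      have hsj : j - 1 ≠ w - d := by
        intro hc
        rw [hc] at hj1
        exact hj1 (hinit _ le_rfl)
      have hadj := (h.cover hm hx h0 (i := j - 2) (by omega)).resolve_left
        (by rwa [show j - 2 + 1 = j - 1 by omega])
      have hjm : j ≠ m - 1 := by
        rintro rfl
        exact h.last_not_mem hx h0 hbK
      have hr := isPathSeq_rotate hx (by omega) hadj
      have hend : rotate x m (j - 2) (m - 1 - 1) = x j := by
        rw [rotate_of_lt (by omega)]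
        congr 1
        omega
      have hc := (hr.take (a := m - 1) (by omega)).cat (IsPathSeq.const f)
        (fun _ _ => by rw [hend]; exact hb.symm)
        (fun k _ hk _ => by
          rcases Nat.lt_or_ge (j - 2) k with hc | hc
          · rw [rotate_of_lt hc]
            exact hP _ (by omega)
          · rw [rotate_of_le hc]
            exact hP _ (by omega))
      rw [show m - 1 + 1 = m by omega] at hc
      obtain ⟨-, -, -, -, -, hiff''⟩ := h.adj_last_iff hm hc
        (by rw [catSeq_of_lt (by omega)]; exact rotate_zero_mem h0 _)
      rw [catSeq_of_le le_rfl] at hiff''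
      refine ((hiff'' _).1 ha).2 i hi ?_
      rw [catSeq_of_lt (by omega), rotate_of_le (by omega)]
  have := Finset.eq_of_subset_of_card_le hsub (by omega)
  rw [← mem_nbrs, this, mem_nbrs]

/-- If the longest paths starting in `K` have exactly `w + d` vertices and end at any vertex
outside `K`, then all vertices outside `K` have the same neighbourhood, contained in `K`. -/
theorem exists_common_nbrs (h : ShortCycles G K w d m) (hm : m = w + d)
    (hend : ∀ f ∉ K, ∃ x, IsPathSeq G x m ∧ x 0 ∈ K ∧ x (m - 1) = f) {f₀ : V} (hf₀ : f₀ ∉ K) :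
    ∃ B ⊆ K, B.card = d ∧ ∀ f ∉ K, ∀ z, G.Adj f z ↔ z ∈ B := by
  obtain ⟨x, hx, h0, hl⟩ := hend f₀ hf₀
  obtain ⟨p, q, hpq⟩ := h.exists_consecutive_crossing hx h0
  obtain ⟨-, -, -, -, -, hiff⟩ := h.adj_last_iff hm hx h0
  refine ⟨nbrs G (x (m - 1)), fun z hz => ((hiff z).1 (mem_nbrs.1 hz)).1,
    (hpq.tight h hx h0).2.2.1, fun f hf z => ?_⟩
  obtain ⟨x', hx', h0', hl'⟩ := hend f hf
  rw [mem_nbrs]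
  exact h.adj_iff_of_last hm hx h0 hx' h0' hl' z

end ShortCycles

namespace ShortCycles

variable {V : Type*} {G : SimpleGraph V} {K : Finset V} {w d m : ℕ} {x : ℕ → V}

/-- `W` is a clique of `d - 1` vertices whose further neighbours are exactly `u` and `v`. -/
structure IsBlock (G : SimpleGraph V) (K : Finset V) (d : ℕ) (u v : V) (W : Finset V) :
    Prop where
  card : W.card = d - 1
  not_mem : ∀ g ∈ W, g ∉ K
  adj_iff : ∀ g ∈ W, ∀ z, G.Adj g z ↔ z ≠ g ∧ (z = u ∨ z = v ∨ z ∈ W)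

theorem IsBlock.symm {u v : V} {W : Finset V} (hW : IsBlock G K d u v W) :
    IsBlock G K d v u W :=
  ⟨hW.card, hW.not_mem, fun g hg z => (hW.adj_iff g hg z).trans (by tauto)⟩

variable [Fintype V]

theorem Crossing.unique (h : ShortCycles G K w d m) (hm : w + d < m) (hx : IsPathSeq G x m)
    (h0 : x 0 ∈ K) {p q p' q' : ℕ} (hpq : Crossing G K m x p q)
    (hpq' : Crossing G K m x p' q') : p = p' ∧ q = q' := by
  have key : ∀ p q p' q', Crossing G K m x p q → Crossing G K m x p' q' → p ≤ p' := by
    intro p q p' q' hpq hpq'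
    have h1 := hpq.lt_length
    have h2 := hpq'.lt_length
    obtain ⟨e1, -, -, -, hcov⟩ := hpq.tight h hx h0
    obtain ⟨e2, -, -, -, -⟩ := hpq'.tight h hx h0
    by_contra hc
    rcases hcov (p' + 1) (by omega) (by omega) (by omega) with hK | hadj
    · exact hpq'.not_mem _ (by omega) (by omega) hK
    · exact hpq'.not_adj _ (by omega) (by omega) hadj
  have h1 := key _ _ _ _ hpq hpq'
  have h2 := key _ _ _ _ hpq' hpq
  have h3 := hpq.lt_length
  have h4 := hpq'.lt_length
  obtain ⟨e1, -, -, -, -⟩ := hpq.tight h hx h0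
  obtain ⟨e2, -, -, -, -⟩ := hpq'.tight h hx h0
  omega

theorem exists_shape (h : ShortCycles G K w d m) (hm : w + d < m) (hx : IsPathSeq G x m)
    (h0 : x 0 ∈ K) : ∃ p q, 3 ≤ w ∧ w - 2 ≤ p ∧ p < q ∧ p + 2 + (m - q) = w + d ∧ q + 1 < m ∧
      (∀ i < m, x i ∈ K ↔ i ≤ w - 2 ∨ i = q) ∧
      ∀ i, i + 1 < m → (G.Adj (x (m - 1)) (x i) ↔ w - 2 ≤ i ∧ i ≤ p ∨ q ≤ i) := by
  classical
  obtain ⟨p, q, hpq⟩ := h.exists_consecutive_crossing hx h0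
  have hlt := hpq.lt
  have hqm := hpq.lt_length
  obtain ⟨htight, hKw, -, hpq2, hcov⟩ := hpq.tight h hx h0
  obtain ⟨s, hs0, hsm, hs, hmin, hinit, halt⟩ := h.exists_initial hx h0
  have hqm' : q ≠ m - 1 := by
    rintro rfl
    exact h.last_not_mem hx h0 hpq.mem
  have hsp : s ≤ p := by
    by_contra hc
    exact hmin p (by omega) hpq.adj
  have hmem : ∀ i < m, x i ∈ K ↔ i ≤ s ∨ i = q := by
    intro i hi
    constructor
    · intro hiK
      by_contra! hc
      obtain ⟨p', hp1, hp2, hp', hmax⟩ := exists_greatest_lt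
        (P := fun i => G.Adj (x (m - 1)) (x i)) hc.1 hs
      obtain ⟨q', hq1, ⟨hq2, hq'⟩, hminq⟩ := exists_least (P := fun i => p' < i ∧ x i ∈ K)
        ⟨hp2, hiK⟩
      have hcr : Crossing G K m x p' q' := ⟨hq2, by omega, hp', hq',
        fun i h1 h2 h3 => hminq i h2 ⟨h1, h3⟩, fun i h1 h2 => hmax i h1 (by omega)⟩
      obtain ⟨rfl, rfl⟩ := hpq.unique h hm hx h0 hcr
      rcases hcov q (by omega) (by omega) (by omega) with hK | hadj
      · exact halt q (by omega) (by omega) hpq.mem hK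
      · exact hmax q (by omega) (by omega) hadj
    · rintro (hi' | rfl)
      · exact hinit i hi'
      · exact hpq.mem
  have hcard : s + 2 = w := by
    rw [← hKw, ← hx.card_filter_mem K fun a ha => h.exists_index_of_mem hx h0 ha]
    have : (Finset.range m).filter (fun i => x i ∈ K) = insert q (Finset.range (s + 1)) := by
      ext i
      simp only [Finset.mem_filter, Finset.mem_range, Finset.mem_insert]
      constructor
      · rintro ⟨hi, hiK⟩
        have := (hmem i hi).1 hiK
        omega
      · intro hi
        exact ⟨by omega, (hmem i (by omega)).2 (by omega)⟩
    rw [this, Finset.card_insert_of_notMem (by simp; omega), Finset.card_range]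
  obtain rfl : s = w - 2 := by omega
  refine ⟨p, q, by omega, hsp, hlt, htight, by omega, hmem, fun i hi => ⟨fun hadj => ?_, ?_⟩⟩
  · have h1 : ¬ i < w - 2 := fun hc => hmin i hc hadj
    have h2 : ¬ (p < i ∧ i < q) := fun hc => hpq.not_adj i hc.1 hc.2 hadj
    omega
  · intro hc
    refine (hcov i (by omega) (by omega) hi).resolve_left fun hK => ?_
    have := (hmem _ hi).1 hK
    omega

/-- The form of a longest path starting in `K` when it has more than `w + d` vertices. -/
theorem shape (h : ShortCycles G K w d m) (hm : w + d < m) (hx : IsPathSeq G x m)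
    (h0 : x 0 ∈ K) : 3 ≤ w ∧ m + 2 = w + 2 * d ∧
      (∀ i < m, x i ∈ K ↔ i ≤ w - 2 ∨ i = w + d - 2) ∧
      ∀ i, i + 1 < m → (G.Adj (x (m - 1)) (x i) ↔ i = w - 2 ∨ w + d - 2 ≤ i) := by
  have hq : ∀ x : ℕ → V, IsPathSeq G x m → x 0 ∈ K → ∃ p q, 3 ≤ w ∧ w - 2 ≤ p ∧ p < q ∧
      p + 2 + (m - q) = w + d ∧ q + 1 < m ∧ (∀ i < m, x i ∈ K ↔ i ≤ w - 2 ∨ i = q) ∧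
      (∀ i, i + 1 < m → (G.Adj (x (m - 1)) (x i) ↔ w - 2 ≤ i ∧ i ≤ p ∨ q ≤ i)) ∧
      q = w + d - 2 := by
    intro x hx h0
    obtain ⟨p, q, hw, hp, hlt, ht, hqm, hmem, hadj⟩ := h.exists_shape hm hx h0
    refine ⟨p, q, hw, hp, hlt, ht, hqm, hmem, hadj, ?_⟩
    have hpy := (hadj p (by omega)).2 (by omega)
    obtain ⟨p', q', -, hp', hlt', ht', hqm', hmem', hadj'⟩ :=
      h.exists_shape hm (isPathSeq_rotate hx (by omega) hpy) (rotate_zero_mem h0 p)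
    have h1 := (hadj' p (by omega)).1 (by
      rw [rotate_last (by omega), rotate_of_le le_rfl]
      exact (hx.adj p (by omega)).symm)
    have h2 := mt (hadj' (p + 1) (by omega)).2 (by
      rw [rotate_last (by omega), rotate_of_lt (by omega), show m + p - (p + 1) = m - 1 by omega]
      intro hc
      have := (hadj (p + 1) (by omega)).1 hc.symm
      omega)
    have h3 := (hmem' q' (by omega)).2 (by omega)
    rw [rotate_of_lt (by omega)] at h3
    have h4 := (hmem _ (by omega)).1 h3
    omega
  obtain ⟨p, q, hw, hp, hlt, ht, hqm, hmem, hadj, rfl⟩ := hq x hx h0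
  have hsy := (hadj (w - 2) (by omega)).2 (by omega)
  obtain ⟨p', q', -, hp', hlt', ht', hqm', hmem', -, rfl⟩ := hq _
    (isPathSeq_rotate hx (by omega) hsy) (rotate_zero_mem h0 _)
  have h3 := (hmem' (w + d - 2) (by omega)).2 (by omega)
  rw [rotate_of_lt (by omega)] at h3
  have h4 := (hmem _ (by omega)).1 h3
  refine ⟨hw, by omega, hmem, fun i hi => (hadj i hi).trans ?_⟩
  omega

theorem adj_tail_iff (h : ShortCycles G K w d m) (hm : w + d < m) (hx : IsPathSeq G x m)
    (h0 : x 0 ∈ K) {i : ℕ} (hi : w + d - 2 < i) (him : i < m) (z : V) :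
    G.Adj (x i) z ↔ ∃ j < m, (j = w - 2 ∨ w + d - 2 ≤ j) ∧ j ≠ i ∧ x j = z := by
  have hlast : ∀ x : ℕ → V, IsPathSeq G x m → x 0 ∈ K → ∀ z,
      (G.Adj (x (m - 1)) z ↔ ∃ j < m - 1, (j = w - 2 ∨ w + d - 2 ≤ j) ∧ x j = z) := by
    intro x hx h0 z
    obtain ⟨hw, hmd, -, hadj⟩ := h.shape hm hx h0
    constructor
    · intro hz
      obtain ⟨j, hj, rfl⟩ := h.exists_index_of_adj hx h0 hz
      have := ne_last_of_adj hz
      exact ⟨j, by omega, (hadj j (by omega)).1 hz, rfl⟩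
    · rintro ⟨j, hj, hj', rfl⟩
      exact (hadj j (by omega)).2 hj'
  obtain ⟨hw, hmd, -, hadj⟩ := h.shape hm hx h0
  rcases eq_or_ne i (m - 1) with rfl | hne
  · rw [hlast x hx h0]
    constructor
    · rintro ⟨j, hj, hj', rfl⟩
      exact ⟨j, by omega, hj', by omega, rfl⟩
    · rintro ⟨j, hj, hj', hj1, rfl⟩
      exact ⟨j, by omega, hj', rfl⟩
  · have hy := (hadj (i - 1) (by omega)).2 (by omega)
    have hr := hlast _ (isPathSeq_rotate hx (by omega) hy) (rotate_zero_mem h0 _) z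
    rw [rotate_last (by omega), show i - 1 + 1 = i by omega] at hr
    rw [hr]
    clear hr
    constructor
    · rintro ⟨j, hj, hj', rfl⟩
      rcases Nat.lt_or_ge (i - 1) j with hc | hc
      · refine ⟨m + (i - 1) - j, ?_, ?_, ?_, (rotate_of_lt hc).symm⟩ <;> omega
      · exact ⟨j, by omega, hj', by omega, by rw [rotate_of_le hc]⟩
    · rintro ⟨j, hj, hj', hji, rfl⟩
      rcases Nat.lt_or_ge (i - 1) j with hc | hc
      · refine ⟨m + (i - 1) - j, by omega, by omega, ?_⟩
        rw [rotate_of_lt (by omega)]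
        congr 1
        omega
      · exact ⟨j, by omega, hj', by rw [rotate_of_le hc]⟩

theorem exists_block_tail (h : ShortCycles G K w d m) (hm : w + d < m) (hx : IsPathSeq G x m)
    (h0 : x 0 ∈ K) : ∃ W, IsBlock G K d (x (w - 2)) (x (w + d - 2)) W ∧
      ∀ z, z ∈ W ↔ ∃ i, w + d - 2 < i ∧ i < m ∧ x i = z := by
  classical
  obtain ⟨hw, hmd, hmem, -⟩ := h.shape hm hx h0
  have hW : ∀ z, z ∈ (Finset.Ico (w + d - 1) m).image x ↔
      ∃ i, w + d - 2 < i ∧ i < m ∧ x i = z := by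
    intro z
    simp only [Finset.mem_image, Finset.mem_Ico]
    constructor
    · rintro ⟨i, hi, rfl⟩
      exact ⟨i, by omega, hi.2, rfl⟩
    · rintro ⟨i, hi, hi', rfl⟩
      exact ⟨i, by omega, rfl⟩
  refine ⟨_, ⟨?_, ?_, ?_⟩, hW⟩
  · rw [Finset.card_image_of_injOn, Nat.card_Ico]
    · omega
    · intro i hi j hj
      rw [Finset.mem_coe, Finset.mem_Ico] at hi hj
      exact hx.inj i j hi.2 hj.2
  · intro g hg
    obtain ⟨i, hi, him, rfl⟩ := (hW g).1 hg
    rw [hmem i him]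
    omega
  · intro g hg z
    obtain ⟨i, hi, him, rfl⟩ := (hW g).1 hg
    rw [h.adj_tail_iff hm hx h0 hi him, hW]
    constructor
    · rintro ⟨j, hj, hj', hji, rfl⟩
      refine ⟨fun hc => hji (hx.inj _ _ hj him hc), ?_⟩
      rcases hj' with rfl | hj'
      · exact Or.inl rfl
      · rcases eq_or_lt_of_le hj' with rfl | hj'
        · exact Or.inr (Or.inl rfl)
        · exact Or.inr (Or.inr ⟨j, hj', hj, rfl⟩)
    · rintro ⟨hne, rfl | rfl | ⟨j, hj, hjm, rfl⟩⟩
      · exact ⟨w - 2, by omega, by omega, by omega, rfl⟩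
      · exact ⟨w + d - 2, by omega, by omega, by omega, rfl⟩
      · refine ⟨j, hjm, by omega, ?_, rfl⟩
        rintro rfl
        exact hne rfl

theorem exists_block_middle (h : ShortCycles G K w d m) (hm : w + d < m) (hx : IsPathSeq G x m)
    (h0 : x 0 ∈ K) : ∃ W, IsBlock G K d (x (w - 2)) (x (w + d - 2)) W ∧
      ∀ z, z ∈ W ↔ ∃ i, w - 2 < i ∧ i < w + d - 2 ∧ x i = z := by
  obtain ⟨hw, hmd, -, hadj⟩ := h.shape hm hx h0
  have hy := (hadj (w - 2) (by omega)).2 (by omega)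
  obtain ⟨W, hW, hW'⟩ := h.exists_block_tail hm (isPathSeq_rotate hx (by omega) hy)
    (rotate_zero_mem h0 _)
  rw [rotate_of_le le_rfl, rotate_of_lt (by omega),
    show m + (w - 2) - (w + d - 2) = w + d - 2 by omega] at hW
  refine ⟨W, hW, fun z => (hW' z).trans ⟨?_, ?_⟩⟩
  · rintro ⟨i, hi, him, rfl⟩
    exact ⟨m + (w - 2) - i, by omega, by omega, by rw [rotate_of_lt (by omega)]⟩
  · rintro ⟨i, hi, hi', rfl⟩
    refine ⟨m + (w - 2) - i, by omega, by omega, ?_⟩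
    rw [rotate_of_lt (by omega)]
    congr 1
    omega

theorem exists_block_of_adj (h : ShortCycles G K w d m) (hm : w + d < m) (hx : IsPathSeq G x m)
    (h0 : x 0 ∈ K) {f : V} (hf : ∀ i < m, x i ≠ f) (hadj : G.Adj (x (w + d - 2)) f) :
    ∃ W, IsBlock G K d (x (w - 2)) (x (w + d - 2)) W ∧ f ∈ W := by
  classical
  obtain ⟨hw, hmd, hmem, -⟩ := h.shape hm hx h0
  have hex : IsPathSeq G (catSeq x (w + d - 1) fun _ => f) (w + d) := by
    have := (hx.take (a := w + d - 1) (by omega)).cat (IsPathSeq.const f)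
      (fun _ _ => by rwa [show w + d - 1 - 1 = w + d - 2 by omega])
      (fun i _ hi _ => hf i (by omega))
    rwa [show w + d - 1 + 1 = w + d by omega] at this
  obtain ⟨l, hl, hlm, ⟨z, hz, hzx, hzf⟩, hmax⟩ := exists_greatest_lt (b := m + 1)
    (P := fun l => ∃ z, IsPathSeq G z l ∧ (∀ i ≤ w + d - 2, z i = x i) ∧ z (w + d - 1) = f)
    (show w + d < m + 1 by omega)
    ⟨_, hex, fun i hi => catSeq_of_lt (by omega), catSeq_of_le le_rfl⟩
  have hz0 : z 0 ∈ K := by rwa [hzx 0 (by omega)]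
  have hne : ∀ i j, i < l → j < l → i ≠ j → z i ≠ z j := fun i j hi hj hij hc =>
    hij (hz.inj i j hi hj hc)
  have hnb : nbrs G (z (l - 1)) ⊆ insert (z (w - 2))
      ((Finset.Ico (w + d - 2) (l - 1)).image z) := by
    intro a ha
    rw [mem_nbrs] at ha
    have haz : ∃ i < l, z i = a := by
      by_contra! hc
      have hc' := hz.cat (IsPathSeq.const a) (fun _ _ => ha) fun i j hi _ => hc i hi
      have := h.longest _ _ hc' (by omega) (by rwa [catSeq_of_lt (by omega)])
      refine hmax (l + 1) (by omega) (by omega) ⟨_, hc', fun i hi => ?_, ?_⟩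
      · rw [catSeq_of_lt (by omega), hzx i hi]
      · rw [catSeq_of_lt (by omega), hzf]
    obtain ⟨i, hi, rfl⟩ := haz
    have hil : i ≠ l - 1 := by
      rintro rfl
      exact ha.ne rfl
    simp only [Finset.mem_insert, Finset.mem_image, Finset.mem_Ico]
    rcases lt_trichotomy i (w - 2) with hc | rfl | hc
    · exfalso
      have hsw := hz.swap (e := 0) (f := w - 1) (p := 0) (q := i)
        (fun a b _ ha _ hb hab => h.clique _
          (by rw [hzx a (by omega), hmem a (by omega)]; omega) _
          (by rw [hzx b (by omega), hmem b (by omega)]; omega)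
          (hne _ _ (by omega) (by omega) hab)) (by omega) (by omega) (by omega) (by omega)
        (by omega) (by omega) (by omega)
      have := h.cycle_lt_add _ l ⟨hsw, by omega, by
        rwa [Equiv.swap_apply_left, Equiv.swap_apply_of_ne_of_ne (by omega) (by omega)]⟩
      omega
    · exact Or.inl rfl
    · right
      refine ⟨i, ?_, rfl⟩
      by_contra hc'
      obtain ⟨W, hW, hW'⟩ := h.exists_block_middle hm hx h0
      have hiW := (hW' (z i)).2 ⟨i, hc, by omega, (hzx i (by omega)).symm⟩
      rcases ((hW.adj_iff _ hiW _).1 ha.symm).2 with he | he | he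
      · rw [← hzx _ (by omega)] at he
        exact hne _ _ (by omega) (by omega) (by omega) he
      · rw [← hzx _ (by omega)] at he
        exact hne _ _ (by omega) (by omega) (by omega) he
      · obtain ⟨j, hj, hj', he⟩ := (hW' _).1 he
        rw [← hzx _ (by omega)] at he
        exact hne _ _ (by omega) (by omega) (by omega) he
  have e1 := Finset.card_le_card hnb
  have e2 := Finset.card_insert_le (z (w - 2)) ((Finset.Ico (w + d - 2) (l - 1)).image z)
  have e3 := Finset.card_image_le (s := Finset.Ico (w + d - 2) (l - 1)) (f := z)
  rw [Nat.card_Ico] at e3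
  have e4 := h.degree_le (z (l - 1))
  obtain rfl : l = m := by omega
  obtain ⟨W, hW, hW'⟩ := h.exists_block_tail hm hz hz0
  rw [hzx _ (by omega), hzx _ (by omega)] at hW
  exact ⟨W, hW, (hW' f).2 ⟨w + d - 1, by omega, by omega, hzf⟩⟩

/-- Interchanging the two cut vertices on a longest path. -/
theorem isPathSeq_swap_cut (h : ShortCycles G K w d m) (hm : w + d < m) (hx : IsPathSeq G x m)
    (h0 : x 0 ∈ K) :
    IsPathSeq G (fun i => x (Equiv.swap (w - 2) (w + d - 2) i)) m := by
  obtain ⟨hw, hmd, hmem, -⟩ := h.shape hm hx h0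
  obtain ⟨W₁, hW₁, hW₁'⟩ := h.exists_block_middle hm hx h0
  obtain ⟨W₂, hW₂, hW₂'⟩ := h.exists_block_tail hm hx h0
  have hne : ∀ i j, i < m → j < m → i ≠ j → x i ≠ x j := fun i j hi hj hij hc =>
    hij (hx.inj i j hi hj hc)
  have hmid : ∀ i, w - 2 < i → i < w + d - 2 →
      G.Adj (x i) (x (w - 2)) ∧ G.Adj (x i) (x (w + d - 2)) := by
    intro i hi hi'
    have hiW := (hW₁' (x i)).2 ⟨i, hi, hi', rfl⟩
    exact ⟨(hW₁.adj_iff _ hiW _).2 ⟨hne _ _ (by omega) (by omega) (by omega), Or.inl rfl⟩,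
      (hW₁.adj_iff _ hiW _).2 ⟨hne _ _ (by omega) (by omega) (by omega), Or.inr (Or.inl rfl)⟩⟩
  have htail : G.Adj (x (w + d - 1)) (x (w - 2)) := by
    have hiW := (hW₂' (x (w + d - 1))).2 ⟨w + d - 1, by omega, by omega, rfl⟩
    exact (hW₂.adj_iff _ hiW _).2 ⟨hne _ _ (by omega) (by omega) (by omega), Or.inl rfl⟩
  have hfix : ∀ i, i ≠ w - 2 → i ≠ w + d - 2 → Equiv.swap (w - 2) (w + d - 2) i = i :=
    fun i h1 h2 => Equiv.swap_apply_of_ne_of_ne h1 h2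
  refine ⟨fun i j hi hj he => ?_, fun i hi => ?_⟩
  · refine (Equiv.swap (w - 2) (w + d - 2)).injective (hx.inj _ _ ?_ ?_ he)
    · rw [Equiv.swap_apply_def]; split_ifs <;> omega
    · rw [Equiv.swap_apply_def]; split_ifs <;> omega
  · by_cases h1 : i + 1 = w - 2
    · rw [h1, Equiv.swap_apply_left, hfix i (by omega) (by omega)]
      exact h.clique _ ((hmem _ (by omega)).2 (by omega)) _ ((hmem _ (by omega)).2 (by omega))
        (hne _ _ (by omega) (by omega) (by omega))
    by_cases h2 : i = w - 2
    · rw [h2, Equiv.swap_apply_left, hfix _ (by omega) (by omega)]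
      exact (hmid _ (by omega) (by omega)).2.symm
    by_cases h3 : i + 1 = w + d - 2
    · rw [h3, Equiv.swap_apply_right, hfix i (by omega) (by omega)]
      exact (hmid _ (by omega) (by omega)).1
    by_cases h4 : i = w + d - 2
    · rw [h4, Equiv.swap_apply_right, hfix _ (by omega) (by omega),
        show w + d - 2 + 1 = w + d - 1 by omega]
      exact htail.symm
    · rw [hfix _ (by omega) (by omega), hfix _ (by omega) (by omega)]
      exact hx.adj i hi

theorem exists_block_of_index (h : ShortCycles G K w d m) (hm : w + d < m)
    (hx : IsPathSeq G x m) (h0 : x 0 ∈ K) {i : ℕ} (hi : i < m) (hiK : x i ∉ K) :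
    ∃ W, IsBlock G K d (x (w - 2)) (x (w + d - 2)) W ∧ x i ∈ W := by
  obtain ⟨hw, hmd, hmem, -⟩ := h.shape hm hx h0
  have hc := mt (hmem i hi).2 hiK
  rcases Nat.lt_or_ge i (w + d - 2) with h1 | h1
  · obtain ⟨W, hW, hW'⟩ := h.exists_block_middle hm hx h0
    exact ⟨W, hW, (hW' _).2 ⟨i, by omega, h1, rfl⟩⟩
  · obtain ⟨W, hW, hW'⟩ := h.exists_block_tail hm hx h0
    exact ⟨W, hW, (hW' _).2 ⟨i, by omega, hi, rfl⟩⟩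

theorem exists_block_of_adj_cut (h : ShortCycles G K w d m) (hm : w + d < m)
    (hx : IsPathSeq G x m) (h0 : x 0 ∈ K) {f : V} (hfK : f ∉ K)
    (hadj : G.Adj (x (w - 2)) f ∨ G.Adj (x (w + d - 2)) f) :
    ∃ W, IsBlock G K d (x (w - 2)) (x (w + d - 2)) W ∧ f ∈ W := by
  obtain ⟨hw, hmd, hmem, -⟩ := h.shape hm hx h0
  by_cases hP : ∃ i < m, x i = f
  · obtain ⟨i, hi, rfl⟩ := hP
    exact h.exists_block_of_index hm hx h0 hi hfK
  push Not at hP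
  rcases hadj with hadj | hadj
  · obtain ⟨W, hW, hfW⟩ := h.exists_block_of_adj hm (h.isPathSeq_swap_cut hm hx h0)
      (by rwa [Equiv.swap_apply_of_ne_of_ne (by omega) (by omega)]) (f := f)
      (fun i hi => hP _ (by rw [Equiv.swap_apply_def]; split_ifs <;> omega))
      (by rwa [Equiv.swap_apply_right])
    rw [Equiv.swap_apply_right, Equiv.swap_apply_left] at hW
    exact ⟨W, hW.symm, hfW⟩
  · exact h.exists_block_of_adj hm hx h0 hP hadj

/-- If the longest paths starting in `K` have more than `w + d` vertices, then the vertices outside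
`K` are partitioned into blocks attached to the same two vertices of `K`. -/
theorem exists_blocks (h : ShortCycles G K w d m) (hm : w + d < m) (hx : IsPathSeq G x m)
    (h0 : x 0 ∈ K) : m + 2 = w + 2 * d ∧ ∃ u ∈ K, ∃ v ∈ K, u ≠ v ∧
      ∀ f ∉ K, ∃ W, IsBlock G K d u v W ∧ f ∈ W := by
  obtain ⟨hw, hmd, hmem, -⟩ := h.shape hm hx h0
  have huK : x (w - 2) ∈ K := (hmem _ (by omega)).2 (by omega)
  have hvK : x (w + d - 2) ∈ K := (hmem _ (by omega)).2 (by omega)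
  have huv : x (w - 2) ≠ x (w + d - 2) := fun hc => by
    have := hx.inj _ _ (by omega) (by omega) hc
    omega
  refine ⟨hmd, _, huK, _, hvK, huv, ?_⟩
  by_contra! hbad
  set u := x (w - 2) with hu
  set v := x (w + d - 2) with hv
  set bad : Set V := {f | f ∉ K ∧ ∀ W, IsBlock G K d u v W → f ∉ W} with hbadset
  have hadj : ∀ f ∈ bad, ∀ g, G.Adj f g → g ∉ bad → ∃ i < w - 2, x i = g := by
    intro f hf g hfg hg
    have hgK : g ∈ K := by
      by_contra hgK
      rw [hbadset, Set.mem_ofPred_eq] at hg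
      push Not at hg
      obtain ⟨W, hW, hgW⟩ := hg hgK
      rcases ((hW.adj_iff g hgW f).1 hfg.symm).2 with he | he | he
      · exact hf.1 (he ▸ huK)
      · exact hf.1 (he ▸ hvK)
      · exact hf.2 W hW he
    obtain ⟨i, hi, rfl⟩ := h.exists_index_of_mem hx h0 hgK
    have hi' := (hmem i hi).1 hgK
    refine ⟨i, ?_, rfl⟩
    by_contra hc
    obtain ⟨W, hW, hfW⟩ := h.exists_block_of_adj_cut hm hx h0 hf.1 (by
      rcases hi' with hi' | rfl
      · obtain rfl : i = w - 2 := by omega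
        exact Or.inl hfg.symm
      · exact Or.inr hfg.symm)
    exact hf.2 W hW hfW
  obtain ⟨f, hfK, hf⟩ := hbad
  have hub : u ∉ bad := fun hc => hc.1 huK
  have hvb : v ∉ bad := fun hc => hc.1 hvK
  obtain ⟨z, l, hz, hz0, hzl, hzu, -, hzB⟩ := h.noCut.exists_path u bad badᶜ
    ⟨f, ⟨hfK, hf⟩, fun hc => hub (hc ▸ ⟨hfK, hf⟩)⟩ ⟨v, hvb, huv.symm⟩
  have hl0 : l ≠ 0 := by
    rintro rfl
    exact hzl hz0
  have hb : z (l - 1) ∈ bad := not_not.1 (hzB (l - 1) (by omega))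
  have hba := hz.adj (l - 1) (by omega)
  rw [show l - 1 + 1 = l by omega] at hba
  obtain ⟨i, hi, hia⟩ := hadj _ hb _ hba hzl
  rw [← hia] at hba
  have hiK : x i ∈ K := (hmem _ (by omega)).2 (by omega)
  have hib : x i ∉ bad := fun hc => hc.1 hiK
  obtain ⟨y, k, hy, hy0, hyk, hya, -, hyB⟩ := h.noCut.exists_path (x i)
    {b | b ∈ bad ∧ G.Adj (x i) b} badᶜ ⟨z (l - 1), ⟨hb, hba.symm⟩, fun hc => hib (hc ▸ hb)⟩
    ⟨v, hvb, fun hc => by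
      have := hx.inj _ _ (by omega) (by omega) hc
      omega⟩
  have hk0 : k ≠ 0 := by
    rintro rfl
    exact hyk hy0.1
  have hbk : y (k - 1) ∈ bad := not_not.1 (hyB (k - 1) (by omega))
  have hka := hy.adj (k - 1) (by omega)
  rw [show k - 1 + 1 = k by omega] at hka
  obtain ⟨j, hj, hja⟩ := hadj _ hbk _ hka hyk
  have hij : i ≠ j := by
    rintro rfl
    exact hya k le_rfl hja.symm
  obtain ⟨x', hx', hx0, hx1, hxk, hxl⟩ := hx.exists_bring_front (s := w - 2) (by omega)
    (fun a b ha hb hab => h.clique _ ((hmem a (by omega)).2 (by omega)) _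
      ((hmem b (by omega)).2 (by omega)) fun he => hab (hx.inj _ _ (by omega) (by omega) he))
    hi hj hij
  have hgood : ∀ i < m, x i ∉ bad := by
    intro i hi hc
    obtain ⟨W, hW, hiW⟩ := h.exists_block_of_index hm hx h0 hi hc.1
    exact hc.2 W hW hiW
  have hgood' : ∀ i < m, x' i ∉ bad := by
    intro i hi
    rcases Nat.lt_or_ge i (w - 2) with hc | hc
    · obtain ⟨l, hl, he⟩ := hxl i hc
      rw [he]
      exact hgood l (by omega)
    · rw [hxk i hc]
      exact hgood i hi
  have hybad : ∀ i < k, y i ∈ bad := fun i hi => not_not.1 (hyB i hi)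
  have hc := ((hx'.take (a := 1) (by omega)).cat (hy.take (a := k) (by omega))
    (fun _ _ => by rw [hx0]; exact hy0.2)
    (fun a b ha hb he => hgood' a (by omega) (he ▸ hybad b hb))).cat
    (hx'.drop (a := m - 1) 1 (by omega))
    (fun _ _ => by
      rw [catSeq_of_le (by omega), show 1 + k - 1 - 1 = k - 1 by omega, hx1, hja]
      exact hka)
    (fun a b ha hb => by
      rcases Nat.lt_or_ge a 1 with hc | hc
      · rw [catSeq_of_lt hc]
        intro he
        have := hx'.inj _ _ (by omega) (by omega) he
        omega
      · rw [catSeq_of_le hc]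
        exact fun he => hgood' _ (by omega) (he ▸ hybad _ (by omega)))
  have := h.longest _ _ hc (by omega)
    (by rw [catSeq_of_lt (by omega), catSeq_of_lt (by omega), hx0]; exact hiK)
  omega

end ShortCycles

section EdgeMaximal

variable {V : Type*} {G H : SimpleGraph V} {x c : ℕ → V} {l m M : ℕ}

theorem NoCutVertex.mono (h : NoCutVertex G) (hGH : G ≤ H) : NoCutVertex H := fun v a b ha hb => by
  obtain ⟨z, l, h1, h2, h3, h4⟩ := h v a b ha hb
  exact ⟨z, l, h1, h2, h3, fun i hi => hGH (h4 i hi)⟩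

theorem IsCycleSeq.rotate (hc : IsCycleSeq G c l) {i : ℕ} (hi : i + 1 < l) :
    IsCycleSeq G (catSeq (fun j => c (i + 1 + j)) (l - (i + 1)) c) l := by
  have h1 := (hc.toIsPathSeq.drop (a := l - (i + 1)) (i + 1) (by omega)).cat
    (hc.toIsPathSeq.take (a := i + 1) (by omega))
    (fun _ _ => by
      rw [show i + 1 + (l - (i + 1) - 1) = l - 1 by omega]
      exact hc.closes)
    (fun a b ha hb he => by
      have := hc.inj _ _ (by omega) (by omega) he
      omega)
  rw [show l - (i + 1) + (i + 1) = l by omega] at h1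
  refine ⟨h1, hc.three_le, ?_⟩
  rw [catSeq_of_le (by omega), catSeq_of_lt (by omega),
    show l - 1 - (l - (i + 1)) = i by omega, Nat.add_zero]
  exact hc.adj i hi

/-- A cycle that is not a cycle of the subgraph `G` can be read so that its closing edge is not an
edge of `G`. -/
theorem IsCycleSeq.exists_not_adj (hc : IsCycleSeq H c l) (hG : ¬ IsCycleSeq G c l) :
    ∃ c', IsCycleSeq H c' l ∧ ¬ G.Adj (c' (l - 1)) (c' 0) := by
  by_cases h1 : G.Adj (c (l - 1)) (c 0)
  · have : ∃ i, i + 1 < l ∧ ¬ G.Adj (c i) (c (i + 1)) := by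
      by_contra! hcon
      exact hG ⟨⟨hc.inj, hcon⟩, hc.three_le, h1⟩
    obtain ⟨i, hi, hadj⟩ := this
    refine ⟨_, hc.rotate hi, ?_⟩
    rw [catSeq_of_le (by omega), catSeq_of_lt (by omega),
      show l - 1 - (l - (i + 1)) = i by omega, Nat.add_zero]
    exact hadj
  · exact ⟨c, hc, h1⟩

/-- In a graph that is edge-maximal without cycles of at least `M` vertices, nonadjacent vertices
are joined by a path with at least `M` vertices. -/
theorem exists_path_of_maximal
    (hG : Maximal (fun H : SimpleGraph V => ∀ c l, IsCycleSeq H c l → l < M) G) {a b : V}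
    (hab : a ≠ b) (hadj : ¬ G.Adj a b) :
    ∃ z l, IsPathSeq G z l ∧ M ≤ l ∧ 0 < l ∧ z 0 = a ∧ z (l - 1) = b := by
  have hlt : ¬ G ⊔ edge a b ≤ G := by
    intro hc
    exact hadj (hc (Or.inr ((edge_adj ..).2 ⟨Or.inl ⟨rfl, rfl⟩, hab⟩)))
  have hnot : ¬ ∀ c l, IsCycleSeq (G ⊔ edge a b) c l → l < M := fun hc =>
    hlt (hG.2 hc le_sup_left)
  push Not at hnot
  obtain ⟨c, l, hc, hl⟩ := hnot
  obtain ⟨z, hz, hzn⟩ := hc.exists_not_adj (G := G) fun hc' => by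
    have := hG.1 c l hc'
    omega
  have h3 := hz.three_le
  have hedge : ∀ i j, (G ⊔ edge a b).Adj (z i) (z j) → ¬ G.Adj (z i) (z j) →
      z i = a ∧ z j = b ∨ z i = b ∧ z j = a := by
    intro i j h1 h2
    rw [sup_adj, edge_adj] at h1
    exact (h1.resolve_left h2).1
  have hcl := hedge _ _ hz.closes hzn
  have hpath : IsPathSeq G z l := by
    refine ⟨hz.inj, fun i hi => ?_⟩
    by_contra hn
    have hi' := hedge _ _ (hz.adj i hi) hn
    have key : z i = z (l - 1) ∨ z i = z 0 ∧ z (i + 1) = z (l - 1) := by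
      rcases hi' with ⟨e1, e2⟩ | ⟨e1, e2⟩ <;> rcases hcl with ⟨e3, e4⟩ | ⟨e3, e4⟩ <;>
        simp [e1, e2, e3, e4]
    rcases key with he | ⟨he, he'⟩
    · have := hz.inj _ _ (by omega) (by omega) he
      omega
    · have h1 := hz.inj _ _ (by omega) (by omega) he
      have h2 := hz.inj _ _ (by omega) (by omega) he'
      omega
  rcases hcl with ⟨e1, e2⟩ | ⟨e1, e2⟩
  · refine ⟨_, l, hpath.backwards (a := l) (l - 1) (by omega) (by omega), hl, by omega, ?_, ?_⟩
    · rw [Nat.sub_zero, e1]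
    · rw [Nat.sub_self, e2]
  · exact ⟨z, l, hpath, hl, by omega, e2, e1⟩

theorem exists_isCycleSeq_of_complete [Fintype V] (h3 : 3 ≤ Fintype.card V)
    (hG : ∀ a b, a ≠ b → G.Adj a b) : ∃ c, IsCycleSeq G c (Fintype.card V) := by
  classical
  obtain ⟨a, b, hab⟩ := Fintype.one_lt_card_iff.1 (show 1 < Fintype.card V by omega)
  obtain ⟨c, hinj, -, -, h0, hl⟩ := exists_enumeration Finset.univ (Finset.mem_univ a)
    (Finset.mem_univ b) hab
  rw [Finset.card_univ] at hinj hl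
  refine ⟨c, ⟨hinj, fun i hi => hG _ _ fun he => ?_⟩, h3, ?_⟩
  · have := hinj _ _ (by omega) hi he
    omega
  · rw [h0, hl]
    exact hG _ _ hab.symm

end EdgeMaximal

/-- Structure of a graph without cut vertices whose cycles are all shorter than
`min n (w + d)`. -/
theorem exists_structure {V : Type*} [Fintype V] {G : SimpleGraph V} {K : Finset V} {w d : ℕ}
    (hn : 3 ≤ Fintype.card V) (hcut : NoCutVertex G)
    (hK : ∀ a ∈ K, ∀ b ∈ K, a ≠ b → G.Adj a b) (hKw : K.card = w) (hw : 2 ≤ w) (hd : 1 ≤ d)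
    (hdeg : ∀ v, d ≤ (nbrs G v).card)
    (hcyc : ∀ c l, IsCycleSeq G c l → l < min (Fintype.card V) (w + d)) :
    (∃ B ⊆ K, B.card = d ∧ ∀ f ∉ K, ∀ z, G.Adj f z ↔ z ∈ B) ∨
    (3 ≤ d ∧ w + 2 * d ≤ Fintype.card V + 2 ∧ ∃ u ∈ K, ∃ v ∈ K, u ≠ v ∧
      ∀ f ∉ K, ∃ W, ShortCycles.IsBlock G K d u v W ∧ f ∈ W) := by
  classical
  obtain ⟨H, hGH, hH⟩ := Finite.exists_le_maximal (p := fun H : SimpleGraph V =>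
    ∀ c l, IsCycleSeq H c l → l < min (Fintype.card V) (w + d)) hcyc
  obtain ⟨L, hKL, hL⟩ := Finite.exists_le_maximal
    (p := fun L : Finset V => ∀ a ∈ L, ∀ b ∈ L, a ≠ b → H.Adj a b)
    (fun a ha b hb hab => hGH (hK a ha b hb hab))
  have hnon : ∀ f ∉ L, ∃ a ∈ L, a ≠ f ∧ ¬ H.Adj a f := by
    intro f hf
    by_contra! hc
    refine hf (hL.2 (y := insert f L) ?_ (Finset.subset_insert f L) (Finset.mem_insert_self f L))
    intro a ha b hb hab
    rw [Finset.mem_insert] at ha hb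
    rcases ha with rfl | ha <;> rcases hb with rfl | hb
    · exact absurd rfl hab
    · exact (hc b hb hab.symm).symm
    · exact hc a ha hab
    · exact hL.1 a ha b hb hab
  have hpath : ∀ f ∉ L, ∃ z l, IsPathSeq H z l ∧ min (Fintype.card V) (w + d) ≤ l ∧ 0 < l ∧
      z 0 ∈ L ∧ z (l - 1) = f := by
    intro f hf
    obtain ⟨a, ha, haf, hadj⟩ := hnon f hf
    obtain ⟨z, l, hz, hl, hl0, h0, h1⟩ := exists_path_of_maximal hH haf hadj
    exact ⟨z, l, hz, hl, hl0, h0 ▸ ha, h1⟩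
  have hne : ∃ f, f ∉ L := by
    by_contra! hc
    obtain ⟨c, hc⟩ := exists_isCycleSeq_of_complete hn fun a b hab =>
      hL.1 a (hc a) b (hc b) hab
    have := hH.1 _ _ hc
    omega
  obtain ⟨f₀, hf₀⟩ := hne
  obtain ⟨z₀, l₀, hz₀, hl₀, hl₀', h0₀, -⟩ := hpath f₀ hf₀
  have hln := hz₀.length_le_card
  obtain ⟨m, hlm, hmn, ⟨x, hx, h0⟩, hmax⟩ := exists_greatest_lt (b := Fintype.card V + 1)
    (P := fun l => ∃ z, IsPathSeq H z l ∧ z 0 ∈ L) (show l₀ < _ by omega) ⟨z₀, hz₀, h0₀⟩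
  have hKL' := Finset.card_le_card hKL
  have hSC : ShortCycles H L w d m := by
    refine ⟨hL.1, by omega, hw, fun v => (hdeg v).trans (Finset.card_le_card fun z hz =>
      mem_nbrs.2 (hGH (mem_nbrs.1 hz))), by omega, fun c l hc => ?_, fun c l hc => ?_,
      fun z l hz _ hz0 => ?_, hcut.mono hGH⟩
    · have := hH.1 c l hc
      omega
    · have := hH.1 c l hc
      omega
    · have := hz.length_le_card
      by_contra hc
      exact hmax l (by omega) (by omega) ⟨z, hz, hz0⟩
  obtain ⟨p, q, hpq⟩ := hSC.exists_consecutive_crossing hx h0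
  have hlt := hpq.lt
  have hqm := hpq.lt_length
  obtain ⟨ht, hLw, -, hpq2, -⟩ := hpq.tight hSC hx h0
  obtain rfl : K = L := Finset.eq_of_subset_of_card_le hKL (by omega)
  have hsame : ∀ f, (nbrs H f).card ≤ d → ∀ z, G.Adj f z ↔ H.Adj f z := by
    intro f hf z
    have hsub : nbrs G f ⊆ nbrs H f := fun z hz => mem_nbrs.2 (hGH (mem_nbrs.1 hz))
    have := Finset.eq_of_subset_of_card_le hsub (hf.trans (hdeg f))
    rw [← mem_nbrs, this, mem_nbrs]
  rcases eq_or_lt_of_le (show w + d ≤ m by omega) with hm | hm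
  · left
    obtain ⟨B, hB, hBd, hadj⟩ := hSC.exists_common_nbrs hm.symm (fun f hf => by
      obtain ⟨z, l, hz, hl, hl0, hz0, hzl⟩ := hpath f hf
      have := hSC.longest z l hz hl0 hz0
      obtain rfl : l = m := by omega
      exact ⟨z, hz, hz0, hzl⟩) hf₀
    refine ⟨B, hB, hBd, fun f hf z => (hsame f ?_ z).trans (hadj f hf z)⟩
    rw [← hBd]
    exact Finset.card_le_card fun z hz => (hadj f hf z).1 (mem_nbrs.1 hz)
  · right
    obtain ⟨hmd, u, hu, v, hv, huv, hblock⟩ := hSC.exists_blocks hm hx h0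
    refine ⟨by omega, by omega, u, hu, v, hv, huv, fun f hf => ?_⟩
    obtain ⟨W, hW, hfW⟩ := hblock f hf
    refine ⟨W, ⟨hW.card, hW.not_mem, fun g hg z => (hsame g ?_ z).trans (hW.adj_iff g hg z)⟩, hfW⟩
    have hsub : nbrs H g ⊆ insert u (insert v (W.erase g)) := by
      intro z hz
      have := (hW.adj_iff g hg z).1 (mem_nbrs.1 hz)
      simp only [Finset.mem_insert, Finset.mem_erase]
      tauto
    have e1 := Finset.card_le_card hsub
    have e2 := Finset.card_insert_le u (insert v (W.erase g))
    have e3 := Finset.card_insert_le v (W.erase g)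
    have e4 := Finset.card_erase_of_mem hg
    have e5 := hW.card
    omega

/-- Two graphs whose adjacency is given by the same relation on vertex colours are isomorphic if
all colour classes have the same sizes. -/
theorem nonempty_iso_of_colour {V W ι : Type*} [Fintype V] [Fintype W] [DecidableEq ι]
    {G : SimpleGraph V} {H : SimpleGraph W} {c : V → ι} {c' : W → ι} (R : ι → ι → Prop)
    (hG : ∀ a b, G.Adj a b ↔ a ≠ b ∧ R (c a) (c b))
    (hH : ∀ a b, H.Adj a b ↔ a ≠ b ∧ R (c' a) (c' b))
    (hcard : ∀ i, (Finset.univ.filter fun a => c a = i).card =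
      (Finset.univ.filter fun a => c' a = i).card) : Nonempty (G ≃g H) := by
  have e : ∀ i, Nonempty ({a // c a = i} ≃ {b // c' b = i}) := fun i =>
    ⟨Fintype.equivOfCardEq (by rw [Fintype.card_subtype, Fintype.card_subtype, hcard])⟩
  refine ⟨⟨Equiv.ofFiberEquiv fun i => (e i).some, ?_⟩⟩
  intro a b
  have hmap := Equiv.ofFiberEquiv_map (f := c) (g := c') fun i => (e i).some
  rw [hG, hH, hmap, hmap, (Equiv.injective _).ne_iff]

theorem card_filter_fin {n : ℕ} {P : Fin n → Prop} [DecidablePred P] (a b : ℕ) (hbn : b ≤ n)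
    (hP : ∀ x : Fin n, P x ↔ a ≤ (x : ℕ) ∧ (x : ℕ) < b) :
    (Finset.univ.filter P).card = b - a := by
  rw [← Nat.card_Ico, ← Finset.card_map Fin.valEmbedding]
  congr 1
  ext i
  simp only [Finset.mem_map, Finset.mem_filter, Finset.mem_univ, true_and, Finset.mem_Ico,
    Fin.valEmbedding_apply, hP]
  constructor
  · rintro ⟨y, hy, rfl⟩
    exact hy
  · intro hi
    exact ⟨⟨i, by omega⟩, hi, rfl⟩

theorem nonempty_iso_Hgraph {n w d : ℕ} {G : SimpleGraph (Fin n)} {K B : Finset (Fin n)}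
    (hK : ∀ a ∈ K, ∀ b ∈ K, a ≠ b → G.Adj a b) (hKw : K.card = w) (hB : B ⊆ K) (hBd : B.card = d)
    (hadj : ∀ f ∉ K, ∀ z, G.Adj f z ↔ z ∈ B) : Nonempty (G ≃g Hgraph n (w + d) d) := by
  have hdw : d ≤ w := hBd ▸ hKw ▸ Finset.card_le_card hB
  have hwn : w ≤ n := by simpa [hKw] using Finset.card_le_univ K
  refine nonempty_iso_of_colour (ι := ℕ)
    (c := fun a => if a ∈ B then 1 else if a ∈ K then 0 else 2)
    (c' := fun a => if (a : ℕ) < w - d then 0 else if (a : ℕ) < w then 1 else 2)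
    (fun i j => i = 1 ∨ j = 1 ∨ i = 0 ∧ j = 0) ?_ ?_ ?_
  · intro a b
    have hBa := @hB a
    have hBb := @hB b
    by_cases haK : a ∈ K
    · by_cases hbK : b ∈ K
      · have hab := hK a haK b hbK
        have := fun h : G.Adj a b => h.ne
        split_ifs <;> simp <;> tauto
      · rw [G.adj_comm, hadj b hbK]
        have : a ∈ B → a ≠ b := fun h1 h2 => hbK (h2 ▸ haK)
        split_ifs <;> simp <;> tauto
    · rw [hadj a haK]
      have : b ∈ B → a ≠ b := fun h1 h2 => haK (h2 ▸ hB h1)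
      split_ifs <;> simp <;> tauto
  · intro a b
    rw [Hgraph, fromRel_adj, show w + d - d = w by omega, show w + d - 2 * d = w - d by omega]
    refine and_congr_right fun _ => ?_
    split_ifs <;> simp <;> omega
  · intro i
    rcases lt_trichotomy i 1 with hi | rfl | hi
    · obtain rfl : i = 0 := by omega
      refine Eq.trans ?_ (card_filter_fin 0 (w - d) (by omega) fun x => by
        split_ifs <;> simp <;> omega).symm
      have : (Finset.univ.filter fun a => (if a ∈ B then 1 else if a ∈ K then 0 else 2) = 0)
          = K \ B := by
        ext a
        simp only [Finset.mem_filter, Finset.mem_univ, true_and, Finset.mem_sdiff]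
        split_ifs <;> simp <;> tauto
      rw [this, Finset.card_sdiff_of_subset hB]
      omega
    · refine Eq.trans ?_ (card_filter_fin (w - d) w (by omega) fun x => by
        split_ifs <;> simp <;> omega).symm
      have : (Finset.univ.filter fun a => (if a ∈ B then 1 else if a ∈ K then 0 else 2) = 1)
          = B := by
        ext a
        simp only [Finset.mem_filter, Finset.mem_univ, true_and]
        split_ifs <;> simp <;> tauto
      rw [this]
      omega
    · rcases eq_or_ne i 2 with rfl | hi2
      · refine Eq.trans ?_ (card_filter_fin w n (by omega) fun x => by
          split_ifs <;> simp <;> omega).symm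
        have : (Finset.univ.filter fun a => (if a ∈ B then 1 else if a ∈ K then 0 else 2) = 2)
            = Kᶜ := by
          ext a
          have := @hB a
          simp only [Finset.mem_filter, Finset.mem_univ, true_and, Finset.mem_compl]
          split_ifs <;> simp <;> tauto
        rw [this, Finset.card_compl, Fintype.card_fin]
        omega
      · rw [Finset.filter_eq_empty_iff.2, Finset.filter_eq_empty_iff.2]
        · intro a _
          split_ifs <;> omega
        · intro a _
          split_ifs <;> omega

/-- A graph in which the vertices outside a clique `K` are partitioned into blocks attached to
`u, v ∈ K` admits an indexing of the blocks. -/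
theorem exists_block_index {n w d : ℕ} {G : SimpleGraph (Fin n)} {K : Finset (Fin n)}
    {u v : Fin n} (hKw : K.card = w) (hu : u ∈ K) (hv : v ∈ K)
    (hblock : ∀ f ∉ K, ∃ W, ShortCycles.IsBlock G K d u v W ∧ f ∈ W) :
    ∃ (l : ℕ) (idx : Fin n → ℕ), n = w + l * (d - 1) ∧ (∀ f ∉ K, idx f < l) ∧
      (∀ j < l, (Finset.univ.filter fun f => f ∉ K ∧ idx f = j).card = d - 1) ∧
      ∀ f ∉ K, ∀ z, G.Adj f z ↔ f ≠ z ∧ (z = u ∨ z = v ∨ z ∉ K ∧ idx f = idx z) := by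
  classical
  set blk : Fin n → Finset (Fin n) := fun f => insert f (nbrs G f) \ K with hblk
  have hblk_eq : ∀ W, ShortCycles.IsBlock G K d u v W → ∀ f ∈ W, blk f = W := by
    intro W hW f hf
    ext z
    have h1 := hW.adj_iff f hf z
    have h2 := hW.not_mem z
    simp only [hblk, Finset.mem_sdiff, Finset.mem_insert, mem_nbrs, h1]
    constructor
    · rintro ⟨rfl | ⟨-, rfl | rfl | hz⟩, hzK⟩
      · exact hf
      · exact absurd hu hzK
      · exact absurd hv hzK
      · exact hz
    · intro hz
      refine ⟨?_, h2 hz⟩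
      by_cases hzf : z = f
      · exact Or.inl hzf
      · exact Or.inr ⟨hzf, Or.inr (Or.inr hz)⟩
  have hfiber : ∀ f ∉ K, (Finset.univ.filter fun g => g ∉ K ∧ blk g = blk f).card = d - 1 := by
    intro f hf
    obtain ⟨W, hW, hfW⟩ := hblock f hf
    rw [← hW.card]
    congr 1
    ext g
    simp only [Finset.mem_filter, Finset.mem_univ, true_and]
    constructor
    · rintro ⟨hg, he⟩
      rw [hblk_eq W hW f hfW] at he
      rw [← he]
      simp [hblk, hg]
    · intro hg
      exact ⟨hW.not_mem g hg, by rw [hblk_eq W hW f hfW, hblk_eq W hW g hg]⟩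
  have hout : ∀ f ∉ K, ∀ z, G.Adj f z ↔ f ≠ z ∧ (z = u ∨ z = v ∨ z ∉ K ∧ blk f = blk z) := by
    intro f hf z
    obtain ⟨W, hW, hfW⟩ := hblock f hf
    rw [hW.adj_iff f hfW, ne_comm]
    refine and_congr_right fun _ => or_congr_right (or_congr_right ?_)
    rw [hblk_eq W hW f hfW]
    constructor
    · intro hz
      exact ⟨hW.not_mem z hz, (hblk_eq W hW z hz).symm⟩
    · rintro ⟨hz, rfl⟩
      simp [hblk, hz]
  clear_value blk
  set S := (Kᶜ).image blk with hS
  have hcount : n = w + S.card * (d - 1) := by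
    have h1 := Finset.card_eq_sum_card_image blk Kᶜ
    rw [Finset.sum_const_nat (m := d - 1), Finset.card_compl, Fintype.card_fin, hKw] at h1
    · have hwn : w ≤ n := by simpa [hKw] using Finset.card_le_univ K
      rw [hS]
      omega
    · intro W hW
      obtain ⟨f, hf, rfl⟩ := Finset.mem_image.1 hW
      rw [Finset.mem_compl] at hf
      rw [← hfiber f hf]
      congr 1
      ext g
      simp
  have hmemS : ∀ f ∉ K, blk f ∈ S := fun f hf =>
    Finset.mem_image_of_mem _ (Finset.mem_compl.2 hf)
  obtain ⟨idx, hinj, hlt, hsurj⟩ : ∃ idx : Finset (Fin n) → ℕ,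
      (∀ a ∈ S, ∀ b ∈ S, idx a = idx b → a = b) ∧
      (∀ a ∈ S, idx a < S.card) ∧ ∀ j < S.card, ∃ a ∈ S, idx a = j := by
    refine ⟨fun a => if h : a ∈ S then (S.equivFin ⟨a, h⟩ : ℕ) else 0, ?_, ?_, ?_⟩
    · intro a ha b hb he
      simp only [ha, hb, dif_pos] at he
      simpa using S.equivFin.injective (Fin.ext he)
    · intro a ha
      simp [ha]
    · intro j hj
      refine ⟨(S.equivFin.symm ⟨j, hj⟩ : Finset (Fin n)), Finset.coe_mem _, ?_⟩
      simp
  have hidx : ∀ f ∉ K, ∀ g ∉ K, (idx (blk g) = idx (blk f) ↔ blk g = blk f) := fun f hf g hg =>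
    ⟨hinj _ (hmemS g hg) _ (hmemS f hf), fun h => h ▸ rfl⟩
  refine ⟨S.card, fun f => idx (blk f), hcount, fun f hf => hlt _ (hmemS f hf), ?_, ?_⟩
  · intro j hj
    obtain ⟨W, hW, rfl⟩ := hsurj j hj
    obtain ⟨f, hf, rfl⟩ := Finset.mem_image.1 hW
    rw [Finset.mem_compl] at hf
    rw [← hfiber f hf]
    congr 1
    ext g
    simp only [Finset.mem_filter, Finset.mem_univ, true_and]
    exact and_congr_right (hidx f hf g)
  · intro f hf z
    rw [hout f hf]
    refine and_congr_right fun _ => or_congr_right (or_congr_right ?_)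
    exact and_congr_right fun hz => (hidx z hz f hf).symm

theorem nonempty_iso_Zgraph {n w d : ℕ} {G : SimpleGraph (Fin n)} {K : Finset (Fin n)}
    {u v : Fin n} (hK : ∀ a ∈ K, ∀ b ∈ K, a ≠ b → G.Adj a b) (hKw : K.card = w) (hw : 2 ≤ w)
    (hd : 3 ≤ d) (hn : w + 2 * d ≤ n + 2) (hu : u ∈ K) (hv : v ∈ K) (huv : u ≠ v)
    (hblock : ∀ f ∉ K, ∃ W, ShortCycles.IsBlock G K d u v W ∧ f ∈ W) :
    ∃ l, 2 ≤ l ∧ n = w + l * (d - 1) ∧ Nonempty (G ≃g Zgraph n (w + d) d) := by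
  obtain ⟨l, idx, hcount, hlt, hfiber, hout⟩ := exists_block_index hKw hu hv hblock
  have hl2 : 2 ≤ l := by
    by_contra hc
    have : l * (d - 1) ≤ 1 * (d - 1) := Nat.mul_le_mul_right _ (by omega)
    omega
  have huvK : ∀ a, a = u ∨ a = v → a ∈ K := by
    rintro a (rfl | rfl) <;> assumption
  refine ⟨l, hl2, hcount, nonempty_iso_of_colour (ι := ℕ)
    (c := fun a => if a = u ∨ a = v then 0 else if a ∈ K then 1 else idx a + 2)
    (c' := fun a => if (a : ℕ) < 2 then 0 else if (a : ℕ) < w then 1 else (a - w) / (d - 1) + 2)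
    (fun i j => i = 0 ∨ j = 0 ∨ i = j) ?_ ?_ ?_⟩
  · intro a b
    have ha := huvK a
    have hb := huvK b
    by_cases haK : a ∈ K
    · by_cases hbK : b ∈ K
      · have hab := hK a haK b hbK
        have := fun h : G.Adj a b => h.ne
        grind
      · rw [G.adj_comm, hout b hbK]
        grind
    · rw [hout a haK]
      grind
  · intro a b
    rw [Zgraph, fromRel_adj]
    refine and_congr_right fun _ => ?_
    simp only [Nat.add_sub_cancel]
    split_ifs <;> simp <;> omega
  · intro i
    rcases i with _ | _ | j
    · refine Eq.trans ?_ (card_filter_fin 0 2 (by omega) fun x => by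
        split_ifs <;> simp <;> omega).symm
      have : (Finset.univ.filter fun a => (if a = u ∨ a = v then 0 else if a ∈ K then 1 else
          idx a + 2) = 0) = {u, v} := by
        ext a
        simp only [Finset.mem_filter, Finset.mem_univ, true_and, Finset.mem_insert,
          Finset.mem_singleton]
        split_ifs <;> simp <;> tauto
      rw [this, Finset.card_pair huv]
    · refine Eq.trans ?_ (card_filter_fin 2 w (by omega) fun x => by
        split_ifs <;> simp <;> omega).symm
      have : (Finset.univ.filter fun a => (if a = u ∨ a = v then 0 else if a ∈ K then 1 else
          idx a + 2) = 0 + 1) = K \ {u, v} := by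
        ext a
        simp only [Finset.mem_filter, Finset.mem_univ, true_and, Finset.mem_insert,
          Finset.mem_singleton, Finset.mem_sdiff]
        split_ifs <;> simp <;> tauto
      rw [this, Finset.card_sdiff_of_subset, Finset.card_pair huv, hKw]
      intro a ha
      rw [Finset.mem_insert, Finset.mem_singleton] at ha
      rcases ha with rfl | rfl <;> assumption
    · have hsrc : (Finset.univ.filter fun a => (if a = u ∨ a = v then 0 else if a ∈ K then 1 else
          idx a + 2) = j + 1 + 1) =
          Finset.univ.filter fun a => a ∉ K ∧ idx a = j := by
        ext a
        have ha := huvK a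
        simp only [Finset.mem_filter, Finset.mem_univ, true_and]
        split_ifs <;> simp <;> tauto
      rw [hsrc]
      rcases Nat.lt_or_ge j l with hj | hj
      · have hle : (j + 1) * (d - 1) ≤ l * (d - 1) := Nat.mul_le_mul_right _ hj
        have h2 : (j + 1) * (d - 1) = j * (d - 1) + (d - 1) := by ring
        refine Eq.trans ?_ (card_filter_fin (w + j * (d - 1)) (w + (j + 1) * (d - 1)) (by omega)
          fun x => by
            have := Nat.div_eq_iff (x := x - w) (y := j) (k := d - 1) (by omega)
            split_ifs <;> simp <;> omega).symm
        rw [hfiber j hj, h2]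
        omega
      · rw [Finset.filter_eq_empty_iff.2, Finset.filter_eq_empty_iff.2]
        · intro a _
          have : ((a : ℕ) - w) / (d - 1) < l := by
            rw [Nat.div_lt_iff_lt_mul (by omega)]
            have := a.2
            omega
          grind
        · rintro a _ ⟨haK, ha⟩
          have := hlt a haK
          omega

theorem IsPathSeq.exists_walk {V : Type*} {G : SimpleGraph V} {x : ℕ → V} {l : ℕ}
    (hx : IsPathSeq G x (l + 1)) : ∃ p : G.Walk (x 0) (x l), p.IsPath ∧ p.length = l ∧
      (∀ a ∈ p.support, ∃ i ≤ l, x i = a) ∧ ∀ e ∈ p.edges, ∃ i < l, e = s(x i, x (i + 1)) := by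
  induction l with
  | zero => exact ⟨Walk.nil, by simp, by simp, by simp, by simp⟩
  | succ l ih =>
    obtain ⟨p, hp, hl, hs, he⟩ := ih (hx.take (by omega))
    refine ⟨p.concat (hx.adj l (by omega)), hp.concat ?_ _, by simp [hl], ?_, ?_⟩
    · intro hc
      obtain ⟨i, hi, hi'⟩ := hs _ hc
      have := hx.inj _ _ (by omega) (by omega) hi'
      omega
    · intro a ha
      rw [Walk.support_concat, List.mem_append, List.mem_singleton] at ha
      rcases ha with ha | rfl
      · obtain ⟨i, hi, rfl⟩ := hs a ha
        exact ⟨i, by omega, rfl⟩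
      · exact ⟨l + 1, le_rfl, rfl⟩
    · intro e h
      rw [Walk.edges_concat, List.concat_eq_append, List.mem_append, List.mem_singleton] at h
      rcases h with h | rfl
      · obtain ⟨i, hi, rfl⟩ := he e h
        exact ⟨i, by omega, rfl⟩
      · exact ⟨l, by omega, rfl⟩

theorem IsCycleSeq.le_circumference {V : Type*} [Fintype V] {G : SimpleGraph V} {c : ℕ → V}
    {l : ℕ} (hc : IsCycleSeq G c l) : l ≤ circumference G := by
  have h3 := hc.three_le
  obtain ⟨p, hp, hl, -, he⟩ := IsPathSeq.exists_walk (l := l - 1)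
    (by rw [show l - 1 + 1 = l by omega]; exact hc.toIsPathSeq)
  refine le_csSup ⟨Fintype.card V, ?_⟩ ⟨_, Walk.cons hc.closes p,
    (Walk.cons_isCycle_iff _ _).2 ⟨hp, fun hmem => ?_⟩, by rw [Walk.length_cons]; omega⟩
  · rintro _ ⟨v, q, hq, rfl⟩
    have h1 := hq.isPath_tail.length_lt
    have h2 := Walk.length_tail_add_one hq.not_nil
    omega
  · obtain ⟨i, hi, hi'⟩ := he _ hmem
    rw [Sym2.eq_iff] at hi'
    rcases hi' with ⟨h1, h2⟩ | ⟨h1, h2⟩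
    · have := hc.inj _ _ (by omega) (by omega) h1
      omega
    · have h1 := hc.inj _ _ (by omega) (by omega) h1
      have h2 := hc.inj _ _ (by omega) (by omega) h2
      omega

theorem TwoConnected.noCutVertex {V : Type*} [Fintype V] {G : SimpleGraph V}
    (h : TwoConnected G) : NoCutVertex G := by
  intro v a b ha hb
  obtain ⟨p⟩ := (h.2 v).preconnected ⟨a, ha⟩ ⟨b, hb⟩
  refine ⟨fun i => p.getVert i, p.length, by simp, by simp, fun i _ => (p.getVert i).2,
    fun i hi => p.adj_getVert_succ hi⟩

/-- Let `G` be a 2-connected graph on `n` vertices. Then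
`c(G) ≥ min{n, ω(G) + δ(G)}`, unless `G` is isomorphic to `H(n, ω(G)+δ(G), δ(G))`
or to `Z(n, ω(G)+δ(G), δ(G))`. -/
theorem circumference_cliqueNum_minDegree {n : ℕ} (G : SimpleGraph (Fin n))
    (h2c : TwoConnected G) :
    min n (G.cliqueNum + minDeg G) ≤ circumference G ∨
    Nonempty (G ≃g Hgraph n (G.cliqueNum + minDeg G) (minDeg G)) ∨
    (∃ ℓ, 2 ≤ ℓ ∧
      n = (G.cliqueNum + minDeg G - minDeg G - 2) + ℓ * (minDeg G - 1) + 2 ∧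
      Nonempty (G ≃g Zgraph n (G.cliqueNum + minDeg G) (minDeg G))) := by
  classical
  have hn := h2c.1
  have hcut := h2c.noCutVertex
  obtain ⟨K, hK⟩ := G.exists_isNClique_cliqueNum
  have hdeg_eq : ∀ v [Fintype (G.neighborSet v)], G.degree v = (nbrs G v).card := by
    intro v _
    rw [← card_neighborFinset_eq_degree]
    congr 1
    ext z
    rw [mem_neighborFinset, mem_nbrs]
  have hdeg : ∀ v, minDeg G ≤ (nbrs G v).card := fun v =>
    (@minDegree_le_degree _ G _ (Classical.decRel _) v).trans (hdeg_eq v).le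
  have hnbr : ∀ v, ∃ z, G.Adj v z := by
    intro v
    obtain ⟨a, ha, b, hb, hab⟩ := Finset.one_lt_card.1
      (show 1 < ((Finset.univ : Finset (Fin n)).erase v).card by
        rw [Finset.card_erase_of_mem (Finset.mem_univ v), Finset.card_univ]; omega)
    obtain ⟨z, l, h1, h2, h3, h4⟩ := hcut a v b (Finset.ne_of_mem_erase ha).symm hab.symm
    have hl : l ≠ 0 := by
      rintro rfl
      exact Finset.ne_of_mem_erase hb (h2.symm.trans h1)
    have := h4 0 (by omega)
    rw [h1] at this
    exact ⟨_, this⟩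
  have hd : 1 ≤ minDeg G := by
    have : Nonempty (Fin n) := Fintype.card_pos_iff.1 (by omega)
    refine @le_minDegree_of_forall_le_degree _ G _ (Classical.decRel _) _ _ fun v => ?_
    rw [hdeg_eq]
    obtain ⟨z, hz⟩ := hnbr v
    exact Finset.card_pos.2 ⟨z, (mem_nbrs).2 hz⟩
  have hw : 2 ≤ G.cliqueNum := by
    obtain ⟨x⟩ : Nonempty (Fin n) := Fintype.card_pos_iff.1 (by omega)
    obtain ⟨z, hz⟩ := hnbr x
    rw [← Finset.card_pair hz.ne]
    exact IsClique.card_le_cliqueNum (tc := by simpa using fun _ => hz)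
  rcases Nat.lt_or_ge (circumference G) (min n (G.cliqueNum + minDeg G)) with hlt | hge
  · have hKadj : ∀ a ∈ K, ∀ b ∈ K, a ≠ b → G.Adj a b := fun a ha b hb => hK.isClique ha hb
    rcases exists_structure hn hcut hKadj hK.card_eq hw hd hdeg (fun c l hc => by
      rw [Fintype.card_fin]; exact hc.le_circumference.trans_lt hlt) with
      ⟨B, hB, hBd, hadj⟩ | ⟨hd3, hwd, u, hu, v, hv, huv, hblock⟩
    · exact Or.inr (Or.inl (nonempty_iso_Hgraph hKadj hK.card_eq hB hBd hadj))
    · rw [Fintype.card_fin] at hwd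
      obtain ⟨l, hl, hln, hiso⟩ :=
        nonempty_iso_Zgraph hKadj hK.card_eq hw hd3 hwd hu hv huv hblock
      exact Or.inr (Or.inr ⟨l, hl, by omega, hiso⟩)
  · exact Or.inl hge
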